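/- arXiv:1606.03982 — 2 statements merged into one kernel-verified Lean document; each statement's English description precedes it below -/
import Mathlib

section
/- For every non-deleting MCFG G in which no production has two occurrences of the same non-terminal on its right-hand side, there exist a regular language R, a congruence multiple Dyck language mD, and an alphabetic homomorphism h such that there is a bijection β from the set D_G of derivations of G to R ∩ mD satisfying h(β(d)) = yield(d) for every d ∈ D_G; in particular h(R ∩ mD) = L(G). -/
namespace CS

/-! ### Dyck languages -/

/-- The smallest monoid congruence on `(S ⊕ S)*` (opening/closing brackets)
satisfying the cancellation `σ σ̄ ≡ ε`. -/
inductive DyckRel (S : Type) : List (S ⊕ S) → List (S ⊕ S) → Prop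
  | cancel (σ : S) : DyckRel S [Sum.inl σ, Sum.inr σ] []
  | refl (w : List (S ⊕ S)) : DyckRel S w w
  | symm {u v} : DyckRel S u v → DyckRel S v u
  | trans {u v w} : DyckRel S u v → DyckRel S v w → DyckRel S u w
  | append {u v u' v'} : DyckRel S u v → DyckRel S u' v' →
      DyckRel S (u ++ u') (v ++ v')

/-- The Dyck language `D(S) = [ε]_{≡_S}`. -/
def DyckLang (S : Type) : Set (List (S ⊕ S)) := {w | DyckRel S w []}

/-- The smallest monoid congruence on `(S ⊕ S)*` closed under the cancellation rule
of congruence multiple Dyck languages:  whenever `{σ₁, …, σ_ℓ} ∈ P`,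
`u₀, …, u_ℓ, v₁, …, v_ℓ ∈ D(S)` and `v₁ ⋯ v_ℓ ≡ ε`, then
`u₀ σ₁ v₁ σ̄₁ u₁ ⋯ σ_ℓ v_ℓ σ̄_ℓ u_ℓ ≡ u₀ u₁ ⋯ u_ℓ`.
The data of `σ₁, …, σ_ℓ`, `v₁, …, v_ℓ` and `u₁, …, u_ℓ` is given by a list
`ts` of triples `(σᵢ, vᵢ, uᵢ)`. -/
inductive MDyckRel (S : Type) (P : Set (Set S)) : List (S ⊕ S) → List (S ⊕ S) → Prop
  | refl (w : List (S ⊕ S)) : MDyckRel S P w w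
  | symm {u v} : MDyckRel S P u v → MDyckRel S P v u
  | trans {u v w} : MDyckRel S P u v → MDyckRel S P v w → MDyckRel S P u w
  | append {u v u' v'} : MDyckRel S P u v → MDyckRel S P u' v' →
      MDyckRel S P (u ++ u') (v ++ v')
  | cancel (u0 : List (S ⊕ S)) (ts : List (S × List (S ⊕ S) × List (S ⊕ S))) :
      (ts.map Prod.fst).Nodup →
      {σ | σ ∈ ts.map Prod.fst} ∈ P →
      u0 ∈ DyckLang S →
      (∀ t ∈ ts, t.2.1 ∈ DyckLang S ∧ t.2.2 ∈ DyckLang S) →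
      MDyckRel S P ((ts.map (fun t => t.2.1)).flatten) [] →
      MDyckRel S P
        (u0 ++ (ts.map (fun t => Sum.inl t.1 :: t.2.1 ++ [Sum.inr t.1] ++ t.2.2)).flatten)
        (u0 ++ (ts.map (fun t => t.2.2)).flatten)

/-- The congruence multiple Dyck language `mD_c(S, P) = [ε]_{≡_{S,P}}`. -/
def MDyckLang (S : Type) (P : Set (Set S)) : Set (List (S ⊕ S)) := {w | MDyckRel S P w []}

/-- The class of congruence multiple Dyck languages over `S` of dimension at most `k`. -/
def cmDyckClass (k : ℕ) (S : Type) : Set (Set (List (S ⊕ S))) :=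
  {L | ∃ Pa : Set (Set S), Setoid.IsPartition Pa ∧ (∀ p ∈ Pa, p.ncard ≤ k) ∧
        L = MDyckLang S Pa}

/-! ### Complete commutative strong bimonoids -/

/-- A complete commutative strong bimonoid: two commutative monoid structures
`(A, +, 0)` and `(A, ·, 1)` with `0` multiplicatively absorbing, together with an
infinitary sum operation satisfying the axioms of Droste and Vogler. -/
class CCSBimonoid (A : Type) extends AddCommMonoid A, CommMonoid A where
  zero_mul' : ∀ a : A, 0 * a = 0
  mul_zero' : ∀ a : A, a * 0 = 0
  bigSum : {I : Type} → Set I → (I → A) → A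
  bigSum_empty : ∀ {I : Type} (f : I → A), bigSum (∅ : Set I) f = 0
  bigSum_singleton : ∀ {I : Type} (j : I) (f : I → A), bigSum {j} f = f j
  bigSum_pair : ∀ {I : Type} (j k : I) (f : I → A), j ≠ k →
      bigSum {j, k} f = f j + f k
  bigSum_partition : ∀ {I J : Type} [Countable J] (T : J → Set I) (f : I → A),
      (∀ j j', j ≠ j' → T j ∩ T j' = ∅) →
      bigSum (Set.univ : Set J) (fun j => bigSum (T j) f) = bigSum (⋃ j, T j) f

/-! ### Multiple context-free grammars -/

/-- A production `A → [u₁, …, u_s](A₁, …, A_ℓ)` of an MCFG.  Letters of the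
components are either terminals (`Sum.inl`) or variables `x_i^j`, encoded
0-based as pairs `(i, j)` (`Sum.inr`).  `wf` states well-sortedness of the
variables and `linear` that every variable occurs at most once in `u₁ ⋯ u_s`. -/
structure Production (Δ N : Type) (sortN : N → ℕ) where
  lhs : N
  rhs : List N
  comp : List (List (Δ ⊕ ℕ × ℕ))
  comp_len : comp.length = sortN lhs
  wf : ∀ p ∈ comp.flatten.filterMap Sum.getRight?,
        ∃ h : p.1 < rhs.length, p.2 < sortN (rhs.get ⟨p.1, h⟩)
  linear : (comp.flatten.filterMap Sum.getRight?).Nodup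

namespace Production

variable {Δ N : Type} {sortN : N → ℕ}

/-- The list of occurrences of variables in the components of a production. -/
def vars (ρ : Production Δ N sortN) : List (ℕ × ℕ) :=
  ρ.comp.flatten.filterMap Sum.getRight?

/-- A production is non-deleting if every variable `x_i^j` occurs (at least,
hence by linearity exactly, once). -/
def NonDeleting (ρ : Production Δ N sortN) : Prop :=
  ∀ (i : ℕ) (h : i < ρ.rhs.length), ∀ j < sortN (ρ.rhs.get ⟨i, h⟩), (i, j) ∈ ρ.vars

/-- A production is terminal-free if no terminal occurs in its components. -/
def TerminalFree (ρ : Production Δ N sortN) : Prop :=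
  ∀ u ∈ ρ.comp, ∀ v ∈ u, ∃ p : ℕ × ℕ, v = Sum.inr p

end Production

/-- Substitution of argument tuples for the variables of a component. -/
def subst {Δ : Type} (args : List (List (List Δ))) (u : List (Δ ⊕ ℕ × ℕ)) : List Δ :=
  u.flatMap (fun v => match v with
    | Sum.inl d => [d]
    | Sum.inr (i, j) => (args.getD i []).getD j [])

/-- Rose trees; derivations of an MCFG are well-sorted trees over the productions. -/
inductive Tree (P : Type) : Type
  | node : P → List (Tree P) → Tree P

/-- The yield of a derivation tree: evaluate the string functions bottom-up. -/
def Tree.yield {Δ N : Type} {sortN : N → ℕ} :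
    Tree (Production Δ N sortN) → List (List Δ)
  | .node ρ ts => ρ.comp.map (subst (ts.attach.map (fun t => Tree.yield t.1)))
decreasing_by simp_wf; have := List.sizeOf_lt_of_mem t.2; omega

/-- Relabelling of derivation trees. -/
def Tree.map {P Q : Type} (f : P → Q) : Tree P → Tree Q
  | .node ρ ts => .node (f ρ) (ts.attach.map (fun t => Tree.map f t.1))
decreasing_by simp_wf; have := List.sizeOf_lt_of_mem t.2; omega

/-- Well-sorted derivation trees over a set of productions, from a given
non-terminal. -/
inductive WFDeriv {Δ N : Type} {sortN : N → ℕ} (P : Set (Production Δ N sortN)) :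
    N → Tree (Production Δ N sortN) → Prop
  | node (ρ : Production Δ N sortN) (ts : List (Tree (Production Δ N sortN))) :
      ρ ∈ P → ts.length = ρ.rhs.length →
      (∀ (i : ℕ) (h1 : i < ts.length) (h2 : i < ρ.rhs.length),
        WFDeriv P (ρ.rhs.get ⟨i, h2⟩) (ts.get ⟨i, h1⟩)) →
      WFDeriv P ρ.lhs (Tree.node ρ ts)

/-- A multiple context-free grammar over the terminal alphabet `Δ`. -/
structure MCFG (Δ : Type) where
  N : Type
  sortN : N → ℕ
  S : N
  sort_S : sortN S = 1
  P : Set (Production Δ N sortN)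

namespace MCFG

variable {Δ : Type}

/-- The set `D_G` of derivations of `G` (from the initial non-terminal). -/
def Derivs (G : MCFG Δ) : Set (Tree (Production Δ G.N G.sortN)) :=
  {d | WFDeriv G.P G.S d}

/-- The language of an MCFG. -/
def lang (G : MCFG Δ) : Set (List Δ) :=
  {w | ∃ d ∈ G.Derivs, d.yield = [w]}

/-- `G` has fan-out at most `k`. -/
def FanoutLE (G : MCFG Δ) (k : ℕ) : Prop := ∀ ρ ∈ G.P, ρ.comp.length ≤ k

/-- `G` is non-deleting. -/
def NonDeleting (G : MCFG Δ) : Prop := ∀ ρ ∈ G.P, ρ.NonDeleting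

end MCFG

/-- The class of multiple context-free languages over `Δ` of fan-out at most `k`. -/
def MCFL (k : ℕ) (Δ : Type) : Set (Set (List Δ)) :=
  {L | ∃ G : MCFG Δ, Finite G.N ∧ G.P.Finite ∧ G.FanoutLE k ∧ G.lang = L}

/-! ### Weighted MCFGs -/

/-- The weight of a derivation tree: multiply the weights of the productions at
all positions. -/
def Tree.weight {P A : Type} [CCSBimonoid A] (μ : P → A) : Tree P → A
  | .node ρ ts => μ ρ * (ts.attach.map (fun t => Tree.weight μ t.1)).prod
decreasing_by simp_wf; have := List.sizeOf_lt_of_mem t.2; omega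

/-- An `A`-weighted MCFG. -/
structure WMCFG (A Δ : Type) [CCSBimonoid A] extends MCFG Δ where
  μ : Production Δ N sortN → A
  μ_ne : ∀ ρ ∈ P, μ ρ ≠ 0

/-- The weighted language induced by an `A`-weighted MCFG:
`⟦G⟧(w) = Σ_{d derivation of w} μ̂(d)`. -/
noncomputable def WMCFG.sem {A Δ : Type} [CCSBimonoid A] (G : WMCFG A Δ) :
    List Δ → A :=
  fun w => CCSBimonoid.bigSum
    {d | WFDeriv G.P G.S d ∧ d.yield = [w]} (fun d => d.weight G.μ)

/-- The class of `A`-weighted multiple context-free languages over `Δ`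
of fan-out at most `k`. -/
def WMCFL (k : ℕ) (A Δ : Type) [CCSBimonoid A] : Set (List Δ → A) :=
  {L | ∃ G : WMCFG A Δ, Finite G.N ∧ G.P.Finite ∧ G.toMCFG.FanoutLE k ∧ G.sem = L}

/-! ### Weighted homomorphisms -/

/-- A weighted language is a monomial if its support has at most one element. -/
def IsMonomial {Γ A : Type} [CCSBimonoid A] (m : List Γ → A) : Prop :=
  ∀ u v, m u ≠ 0 → m v ≠ 0 → u = v

/-- `g` induces an `A`-weighted homomorphism. -/
def WeightedHom {Δ Γ A : Type} [CCSBimonoid A] (g : Δ → List Γ → A) : Prop :=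
  ∀ δ, IsMonomial (g δ)

/-- `g` induces an `A`-weighted alphabetic homomorphism: all supports consist of
words of length at most 1. -/
def AlphabeticWeightedHom {Δ Γ A : Type} [CCSBimonoid A] (g : Δ → List Γ → A) : Prop :=
  WeightedHom g ∧ ∀ δ u, g δ u ≠ 0 → u.length ≤ 1

/-- The `A`-weighted homomorphism `ĝ` induced by `g`:
`ĝ(δ₁⋯δ_k)(u) = Σ_{u = u₁⋯u_k} g(δ₁)(u₁)·…·g(δ_k)(u_k)`. -/
noncomputable def whom {Δ Γ A : Type} [CCSBimonoid A] (g : Δ → List Γ → A)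
    (w : List Δ) : List Γ → A :=
  fun u => CCSBimonoid.bigSum
    {ds : List (List Γ) | ds.length = w.length ∧ ds.flatten = u}
    (fun ds => ((w.zip ds).map (fun p => g p.1 p.2)).prod)

/-- The image of a language under an `A`-weighted homomorphism:
`ĝ(L)(u) = Σ_{w ∈ L} ĝ(w)(u)`. -/
noncomputable def whomImage {Δ Γ A : Type} [CCSBimonoid A] (g : Δ → List Γ → A)
    (L : Set (List Δ)) : List Γ → A :=
  fun u => CCSBimonoid.bigSum L (fun w => whom g w u)

/-! ### Regular languages -/

/-- A language is regular if it is recognised by a finite automaton. -/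
def IsRegular {α : Type} (L : Set (List α)) : Prop :=
  ∃ (Q : Type) (_ : Fintype Q) (M : DFA α Q), ∀ w, w ∈ M.accepts ↔ w ∈ L

end CS
namespace CS

/-! ### The unweighted MCFG for a weighted MCFG (weight separation) -/

/-- Relabel the terminals of a component into the marked alphabet. -/
def markify (M : Type) {Δ : Type} (u : List (Δ ⊕ ℕ × ℕ)) :
    List ((Δ ⊕ M) ⊕ ℕ × ℕ) :=
  u.map (Sum.map Sum.inl id)

lemma markify_filterMap (M : Type) {Δ : Type} (u : List (Δ ⊕ ℕ × ℕ)) :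
    (markify M u).filterMap Sum.getRight? = u.filterMap Sum.getRight? := by
  induction u with
  | nil => rfl
  | cons a l ih => cases a <;> first | exact ih | exact congrArg (List.cons _) ih

lemma filterMap_flatten {α β : Type} (f : α → Option β) (l : List (List α)) :
    l.flatten.filterMap f = (l.map (List.filterMap f)).flatten := by
  induction l <;> simp [*]

lemma ofFn_comp_get {α β : Type} (l : List α) (h : α → β) :
    List.ofFn (fun i : Fin l.length => h (l.get i)) = l.map h := by
  conv_rhs => rw [← List.ofFn_get l]
  rw [List.map_ofFn]
  rfl

lemma mark_flatten_vars {Δ M : Type} (l : List (List (Δ ⊕ ℕ × ℕ)))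
    (mk : Fin l.length → Δ ⊕ M) :
    (List.ofFn (fun i =>
        (Sum.inl (mk i) : (Δ ⊕ M) ⊕ ℕ × ℕ) :: markify M (l.get i))).flatten.filterMap
      Sum.getRight? = l.flatten.filterMap Sum.getRight? := by
  rw [filterMap_flatten, List.map_ofFn, filterMap_flatten]
  congr 1
  have : (List.filterMap Sum.getRight? ∘ fun i =>
      (Sum.inl (mk i) : (Δ ⊕ M) ⊕ ℕ × ℕ) :: markify M (l.get i))
      = fun i : Fin l.length => (l.get i).filterMap Sum.getRight? := by
    funext i
    simp [List.filterMap_cons, Sum.getRight?, markify_filterMap]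
  rw [this, ofFn_comp_get]

/-- The production of the unweighted MCFG `G_𝔹` corresponding to a production
`ρ = A → [u₁, …, u_s](A₁, …, A_m)`: each component `uᵢ` is prefixed with the
fresh terminal symbol `ρ^i` (encoded as `Sum.inr (ρ, i)`, 0-based). -/
def boolifyProd {Δ N : Type} {sortN : N → ℕ} (ρ : Production Δ N sortN) :
    Production (Δ ⊕ Production Δ N sortN × ℕ) N sortN where
  lhs := ρ.lhs
  rhs := ρ.rhs
  comp := List.ofFn (fun i : Fin ρ.comp.length =>
    Sum.inl (Sum.inr (ρ, (i : ℕ))) ::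
      markify (Production Δ N sortN × ℕ) (ρ.comp.get i))
  comp_len := by rw [List.length_ofFn]; exact ρ.comp_len
  wf := by
    intro p hp
    rw [mark_flatten_vars] at hp
    exact ρ.wf p hp
  linear := by
    rw [mark_flatten_vars]
    exact ρ.linear

/-- The unweighted MCFG `G_𝔹` for a weighted MCFG `G`. -/
def boolifyGrammar {A Δ : Type} [CCSBimonoid A] (G : WMCFG A Δ) :
    MCFG (Δ ⊕ Production Δ G.N G.sortN × ℕ) where
  N := G.N
  sortN := G.sortN
  S := G.S
  sort_S := G.sort_S
  P := boolifyProd '' G.P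

/-- The weight homomorphism `wts_G` for a weighted MCFG `G`:
`wts_G(δ) = 1.δ`, `wts_G(ρ^1) = μ(ρ).ε` and `wts_G(ρ^i) = 1.ε` for `i ≥ 2`. -/
noncomputable def wtsHom {A Δ : Type} [CCSBimonoid A] (G : WMCFG A Δ) :
    (Δ ⊕ Production Δ G.N G.sortN × ℕ) → List Δ → A := by
  classical
  exact fun γ w => match γ with
    | Sum.inl d => if w = [d] then 1 else 0
    | Sum.inr (ρ, i) => if w = [] then (if i = 0 then G.μ ρ else 1) else 0

/-! ### The multiple Dyck grammar -/

/-- The sorted alphabet `Σ` induced by an `ℕ₊`-sorted set `(Δ, sd)`: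
the opening parentheses `δ^[i]` (0-based: `i < sd δ`). -/
abbrev MSig (Δ : Type) (sd : Δ → ℕ) : Type := {p : Δ × ℕ // p.2 < sd p.1}

/-- The terminal alphabet `Δ̂` of the multiple Dyck grammar: opening and closing
parentheses. -/
abbrev MAlph (Δ : Type) (sd : Δ → ℕ) : Type := MSig Δ sd ⊕ MSig Δ sd

/-- The partition `𝔓 = {𝔭_δ ∣ δ ∈ Δ}` with `𝔭_δ = {δ^[i] ∣ i ∈ [sd δ]}`. -/
def mdgPart (Δ : Type) (sd : Δ → ℕ) : Set (Set (MSig Δ sd)) :=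
  {s | ∃ δ : Δ, s = {p : MSig Δ sd | p.1.1 = δ}}

/-- Sorts of the non-terminals `A₁, …, A_k` (0-based: `A_{i+1}` has sort `i+1`). -/
def dyckSort (k : ℕ) : Fin k → ℕ := fun i => (i : ℕ) + 1

/-- Productions of type (i): `A_s → f(A_{s₁}, …, A_{s_ℓ})` for every linear
non-deleting terminal-free string function `f` with `ℓ ≤ r`. -/
def TypeI (Δ : Type) (sd : Δ → ℕ) (k r : ℕ)
    (ρ : Production (MAlph Δ sd) (Fin k) (dyckSort k)) : Prop :=
  ρ.rhs.length ≤ r ∧ ρ.NonDeleting ∧ ρ.TerminalFree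

/-- Productions of type (ii):
`A_s → [δ^[1] x₁^1 δ̄^[1], …, δ^[s] x₁^s δ̄^[s]](A_s)` for `δ` of sort `s`. -/
def TypeII (Δ : Type) (sd : Δ → ℕ) (k : ℕ)
    (ρ : Production (MAlph Δ sd) (Fin k) (dyckSort k)) : Prop :=
  ∃ δ : Δ, dyckSort k ρ.lhs = sd δ ∧ ρ.rhs = [ρ.lhs] ∧
    ρ.comp = List.ofFn (fun j : Fin (sd δ) =>
      [Sum.inl (Sum.inl ⟨(δ, (j : ℕ)), j.isLt⟩),
       Sum.inr ((0 : ℕ), (j : ℕ)),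
       Sum.inl (Sum.inr ⟨(δ, (j : ℕ)), j.isLt⟩)])

/-- Productions of type (iii): `A_s → [u₁, …, u_s](A_s)` where each
`u_j ∈ {x_j, x_j δ^[1] δ̄^[1], δ^[1] δ̄^[1] x_j}` for `δ` of sort 1. -/
def TypeIII (Δ : Type) (sd : Δ → ℕ) (k : ℕ)
    (ρ : Production (MAlph Δ sd) (Fin k) (dyckSort k)) : Prop :=
  ρ.rhs = [ρ.lhs] ∧
  ∀ (j : ℕ) (h : j < ρ.comp.length),
    ρ.comp.get ⟨j, h⟩ = [Sum.inr ((0 : ℕ), j)] ∨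
    ∃ (δ : Δ) (h1 : 0 < sd δ), sd δ = 1 ∧
      (ρ.comp.get ⟨j, h⟩ =
        [Sum.inr ((0 : ℕ), j),
         Sum.inl (Sum.inl ⟨(δ, 0), h1⟩), Sum.inl (Sum.inr ⟨(δ, 0), h1⟩)] ∨
       ρ.comp.get ⟨j, h⟩ =
        [Sum.inl (Sum.inl ⟨(δ, 0), h1⟩), Sum.inl (Sum.inr ⟨(δ, 0), h1⟩),
         Sum.inr ((0 : ℕ), j)])

/-- The productions of the multiple Dyck grammar `G_Δ`. -/
def mdgProds (Δ : Type) (sd : Δ → ℕ) (k r : ℕ) :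
    Set (Production (MAlph Δ sd) (Fin k) (dyckSort k)) :=
  {ρ | TypeI Δ sd k r ρ ∨ TypeII Δ sd k ρ ∨ TypeIII Δ sd k ρ}

/-- The multiple Dyck grammar `G_Δ` with respect to the sorted set `(Δ, sd)`. -/
def mdgGrammar (Δ : Type) (sd : Δ → ℕ) (k r : ℕ) (hk : 0 < k) :
    MCFG (MAlph Δ sd) where
  N := Fin k
  sortN := dyckSort k
  S := ⟨0, hk⟩
  sort_S := rfl
  P := mdgProds Δ sd k r

end CS

/-!
A derivation is encoded by unfolding it into a forest of brackets. Every component (thread) of a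
production is read at exactly one position of the parent production, and a node of the forest is a
pair of such a position and the production expanded there; its children are the positions in the
thread that is read. Brackets that read the same argument and expand it by the same production form
one cell of the partition, so that the threads of a subderivation are cancelled together.

Each production gets an additional control thread that reads the control threads of its arguments
in order. The control threads contain the whole derivation tree, even below non-terminals of sort
zero, so evaluating them bottom-up in a free monoid recovers the derivation from its encoding.

That the children of every node are the positions of the right thread is checked by a finite
automaton, because a position determines its successors in its thread. This leaves only the
question whether brackets that read the same argument expand it in the same way, and this is what
the congruence enforces. Every word congruent to the empty word is a Dyck word, hence the word of a
forest, and on forests the following number is invariant under the congruence: fix two brackets of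
the same cell and a path of cells, and take the difference between the numbers of their occurrences
among the nodes whose ancestors follow this path. Since it vanishes on the empty word, all brackets
of a cell occur equally often below every path. Going down from the root, this forces all threads
of an argument to be expanded by a common production.
-/

namespace CS

section Forest

variable {B V : Type}

/-- The root label of a tree. -/
def Tree.label : Tree B → B
  | .node X _ => X

/-- The list of immediate subtrees of a tree. -/
def Tree.children : Tree B → List (Tree B)
  | .node _ ts => ts

theorem Tree.sizeOf_lt_of_mem_children [SizeOf B] {t u : Tree B} (h : u ∈ t.children) :
    sizeOf u < sizeOf t := by
  obtain ⟨X, ts⟩ := t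
  have := List.sizeOf_lt_of_mem (show u ∈ ts from h)
  simp only [Tree.node.sizeOf_spec]
  lia

/-- The bracket word of a forest: a node labelled `X` becomes an opening bracket `X`, the word of
its children and a closing bracket `X`. -/
def forestWord : List (Tree B) → List (B ⊕ B)
  | [] => []
  | .node X ts :: E => .inl X :: (forestWord ts ++ .inr X :: forestWord E)

/-- Bottom-up evaluation of a forest in an additive monoid: `N X v` is
the value of a node labelled `X` whose children have total value `v`. -/
def evalForest [AddMonoid V] (N : B → V → V) : List (Tree B) → V
  | [] => 0
  | .node X ts :: E => N X (evalForest N ts) + evalForest N E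

theorem forest_induction {motive : List (Tree B) → Prop} (nil : motive [])
    (cons : ∀ X ts E, motive ts → motive E → motive (.node X ts :: E)) : ∀ E, motive E
  | [] => nil
  | .node X ts :: E =>
    cons X ts E (forest_induction nil cons ts) (forest_induction nil cons E)

theorem forestWord_append (E F : List (Tree B)) :
    forestWord (E ++ F) = forestWord E ++ forestWord F := by
  induction E using forest_induction with
  | nil => simp [forestWord]
  | cons X ts E _ ih => simp [forestWord, ih]

theorem forestWord_cons (t : Tree B) (E : List (Tree B)) :
    forestWord (t :: E) =
      .inl t.label :: (forestWord t.children ++ .inr t.label :: forestWord E) := by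
  cases t
  rw [forestWord, Tree.label, Tree.children]

theorem forestWord_flatMap {ι : Type} (l : List ι) (f : ι → List (Tree B)) :
    forestWord (l.flatMap f) = l.flatMap fun i => forestWord (f i) := by
  induction l with
  | nil => simp [forestWord]
  | cons i l ih => simp [forestWord_append, ih]

theorem evalForest_append [AddMonoid V] (N : B → V → V) (E F : List (Tree B)) :
    evalForest N (E ++ F) = evalForest N E + evalForest N F := by
  induction E using forest_induction with
  | nil => simp [evalForest]
  | cons X ts E _ ih => simp [evalForest, ih, add_assoc]

theorem evalForest_eq_sum [AddMonoid V] (N : B → V → V) (E : List (Tree B)) :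
    evalForest N E = (E.map fun t => N t.label (evalForest N t.children)).sum := by
  induction E using forest_induction with
  | nil => simp [evalForest]
  | cons X ts E _ ih => simp [evalForest, ih, Tree.label, Tree.children]

/-- One step of a stack machine evaluating bracket words: the current value is set aside at an
opening bracket and extended by the value of the completed node at the matching closing bracket. -/
def evalStep [AddMonoid V] (N : B → V → V) : V × List V → B ⊕ B → V × List V
  | (v, st), .inl _ => (0, v :: st)
  | (v, u :: st), .inr X => (u + N X v, st)
  | (v, []), .inr _ => (v, [])

theorem foldl_evalStep_forestWord [AddMonoid V] (N : B → V → V) (E : List (Tree B)) (v : V)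
    (st : List V) :
    (forestWord E).foldl (evalStep N) (v, st) = (v + evalForest N E, st) := by
  induction E using forest_induction generalizing v st with
  | nil => simp [forestWord, evalForest]
  | cons X ts E ihts ihE => simp [forestWord, evalForest, evalStep, ihts, ihE, add_assoc]

end Forest

/-! ### Dyck words are the words of forests -/

section Dyck

variable {S : Type}

theorem dyckRel_forestWord_nil (E : List (Tree S)) : DyckRel S (forestWord E) [] := by
  induction E using forest_induction with
  | nil => simpa [forestWord] using DyckRel.refl []
  | cons X ts E ihts ihE =>
    have hnode : DyckRel S ([.inl X] ++ forestWord ts ++ [.inr X]) [] :=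
      (((DyckRel.refl [.inl X]).append ihts).append (.refl [.inr X])).trans (.cancel X)
    simpa [forestWord] using hnode.append ihE

/-- One step of the Dyck automaton, whose state is the stack of pending opening brackets. -/
def reduceStep [DecidableEq S] : List S → S ⊕ S → Option (List S)
  | st, .inl X => some (X :: st)
  | [], .inr _ => none
  | Y :: st, .inr X => if Y = X then some st else none

theorem DyckRel.foldlM_reduceStep [DecidableEq S] {u v : List (S ⊕ S)} (h : DyckRel S u v) :
    ∀ st, u.foldlM reduceStep st = v.foldlM reduceStep st := by
  induction h with
  | cancel X => intro st; simp [reduceStep]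
  | refl => intro st; rfl
  | symm _ ih => exact fun st => (ih st).symm
  | trans _ _ ih₁ ih₂ => exact fun st => (ih₁ st).trans (ih₂ st)
  | append _ _ ih₁ ih₂ => intro st; simp only [List.foldlM_append, ih₁, ih₂]

theorem exists_forestWord_of_foldlM_reduceStep [DecidableEq S] (w : List (S ⊕ S))
    (st : List S) (hw : w.foldlM reduceStep st = some []) :
    ∃ (E : List (Tree S)) (T : List (S × List (Tree S))), T.map Prod.fst = st ∧
      w = forestWord E ++ T.flatMap fun p => .inr p.1 :: forestWord p.2 := by
  induction w generalizing st with
  | nil => exact ⟨[], [], by simp_all [forestWord]⟩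
  | cons a w ih =>
    cases a with
    | inl X =>
      obtain ⟨E, T, hT, rfl⟩ := ih (X :: st) (by simpa [reduceStep] using hw)
      obtain ⟨p, T, rfl, rfl, rfl⟩ := List.map_eq_cons_iff.1 hT
      exact ⟨.node p.1 E :: p.2, T, rfl, by simp [forestWord]⟩
    | inr X =>
      cases st with
      | nil => simp [reduceStep] at hw
      | cons Y st =>
        obtain rfl : Y = X := by by_contra h; simp [reduceStep, h] at hw
        obtain ⟨E, T, rfl, rfl⟩ := ih st (by simpa [reduceStep] using hw)
        exact ⟨[], (Y, E) :: T, by simp [forestWord]⟩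

theorem dyckLang_eq_range_forestWord : DyckLang S = Set.range forestWord := by
  classical
  ext w
  refine ⟨fun h => ?_, ?_⟩
  · obtain ⟨E, T, hT, rfl⟩ := exists_forestWord_of_foldlM_reduceStep w []
      (by simpa using DyckRel.foldlM_reduceStep h [])
    exact ⟨E, by simp_all⟩
  · rintro ⟨E, rfl⟩
    exact dyckRel_forestWord_nil E

end Dyck

/-! ### Congruence multiple Dyck languages -/

section MDyck

variable {S C V : Type}

theorem evalForest_flatMap [AddMonoid V] {ι : Type} (N : S → V → V) (l : List ι)
    (f : ι → List (Tree S)) :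
    evalForest N (l.flatMap f) = (l.map fun i => evalForest N (f i)).sum := by
  induction l with
  | nil => simp [evalForest]
  | cons i l ih => simp [evalForest_append, ih]

/-- The data `(σ, v, u)` of one factor `σ v σ̄ u` in a cancellation, where `v` and `u` are given as
bracket words of forests. -/
def cancelTriple (p : Tree S × List (Tree S)) : S × List (S ⊕ S) × List (S ⊕ S) :=
  (p.1.label, forestWord p.1.children, forestWord p.2)

theorem exists_map_cancelTriple {ts : List (S × List (S ⊕ S) × List (S ⊕ S))}
    (hts : ∀ t ∈ ts, t.2.1 ∈ DyckLang S ∧ t.2.2 ∈ DyckLang S) :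
    ∃ T : List (Tree S × List (Tree S)), T.map cancelTriple = ts := by
  rw [← Set.mem_range, Set.range_list_map]
  rintro ⟨X, v, u⟩ ht
  obtain ⟨⟨E, rfl⟩, F, rfl⟩ := by simpa only [dyckLang_eq_range_forestWord] using hts _ ht
  exact ⟨(.node X E, F), rfl⟩

theorem cancelTriple_source (U : List (Tree S)) (T : List (Tree S × List (Tree S))) :
    forestWord U ++ ((T.map cancelTriple).map fun t =>
        Sum.inl t.1 :: t.2.1 ++ [Sum.inr t.1] ++ t.2.2).flatten =
      forestWord (U ++ T.flatMap fun p => p.1 :: p.2) := by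
  simp [forestWord_append, forestWord_flatMap, forestWord_cons, cancelTriple, ← List.flatMap_def,
    Function.comp_def]

theorem cancelTriple_target (U : List (Tree S)) (T : List (Tree S × List (Tree S))) :
    forestWord U ++ ((T.map cancelTriple).map fun t => t.2.2).flatten =
      forestWord (U ++ T.flatMap Prod.snd) := by
  simp [forestWord_append, forestWord_flatMap, cancelTriple, ← List.flatMap_def,
    Function.comp_def]

theorem cancelTriple_inner (T : List (Tree S × List (Tree S))) :
    ((T.map cancelTriple).map fun t => t.2.1).flatten =
      forestWord (T.flatMap fun p => p.1.children) := by
  simp [forestWord_flatMap, cancelTriple, ← List.flatMap_def,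
    Function.comp_def]

theorem MDyckRel.dyckRel {P : Set (Set S)} {u v : List (S ⊕ S)} (h : MDyckRel S P u v) :
    DyckRel S u v := by
  induction h with
  | refl w => exact .refl w
  | symm _ ih => exact ih.symm
  | trans _ _ ih₁ ih₂ => exact ih₁.trans ih₂
  | append _ _ ih₁ ih₂ => exact ih₁.append ih₂
  | cancel u₀ ts _ _ hu₀ hts _ _ =>
    obtain ⟨U, rfl⟩ := by simpa only [dyckLang_eq_range_forestWord] using hu₀
    obtain ⟨T, rfl⟩ := exists_map_cancelTriple hts
    rw [cancelTriple_source, cancelTriple_target]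
    exact (dyckRel_forestWord_nil _).trans (dyckRel_forestWord_nil _).symm

theorem MDyckRel.foldl_evalStep [AddCommMonoid V] {P : Set (Set S)} {N : S → V → V}
    (hN : ∀ l : List (S × V), (l.map Prod.fst).Nodup → {X | X ∈ l.map Prod.fst} ∈ P →
      (l.map Prod.snd).sum = 0 → (l.map fun x => N x.1 x.2).sum = 0)
    {u v : List (S ⊕ S)} (h : MDyckRel S P u v) :
    ∀ s, u.foldl (evalStep N) s = v.foldl (evalStep N) s := by
  induction h with
  | refl => intro s; rfl
  | symm _ ih => exact fun s => (ih s).symm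
  | trans _ _ ih₁ ih₂ => exact fun s => (ih₁ s).trans (ih₂ s)
  | append _ _ ih₁ ih₂ => intro s; simp only [List.foldl_append, ih₁, ih₂]
  | cancel u₀ ts hnodup hmem hu₀ hts _ ih =>
    obtain ⟨U, rfl⟩ := by simpa only [dyckLang_eq_range_forestWord] using hu₀
    obtain ⟨T, rfl⟩ := exists_map_cancelTriple hts
    have hinner : (T.map fun p => evalForest N p.1.children).sum = 0 := by
      simp only [cancelTriple_inner] at ih
      simpa [foldl_evalStep_forestWord, evalForest_flatMap] using ih (0, [])
    have houter : (T.map fun p => N p.1.label (evalForest N p.1.children)).sum = 0 := by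
      simpa [Function.comp_def] using
        hN (T.map fun p => (p.1.label, evalForest N p.1.children))
          (by simpa [Function.comp_def, cancelTriple] using hnodup)
          (by simpa [Function.comp_def, cancelTriple] using hmem)
          (by simpa [Function.comp_def] using hinner)
    rintro ⟨v, st⟩
    rw [cancelTriple_source, cancelTriple_target, foldl_evalStep_forestWord,
      foldl_evalStep_forestWord, evalForest_append, evalForest_append, evalForest_flatMap,
      evalForest_flatMap]
    have hcons (p : Tree S × List (Tree S)) : evalForest N (p.1 :: p.2) =
        N p.1.label (evalForest N p.1.children) + evalForest N p.2 := by
      obtain ⟨⟨X, E⟩, F⟩ := p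
      rw [evalForest, Tree.label, Tree.children]
    simp [hcons, List.sum_map_add, houter]

theorem exists_split_filter {α : Type} (p : α → Bool) (l : List α) :
    ∃ (U : List α) (T : List (α × List α)), l = U ++ T.flatMap (fun t => t.1 :: t.2) ∧
      l.filter p = T.map Prod.fst ∧ l.filter (fun a => !p a) = U ++ T.flatMap Prod.snd := by
  induction l with
  | nil => exact ⟨[], [], by simp⟩
  | cons a l ih =>
    obtain ⟨U, T, hl, hp, hn⟩ := ih
    by_cases ha : p a
    · exact ⟨[], (a, U) :: T, by simp [← hl], by simp [ha, hp], by simp [ha, hn]⟩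
    · exact ⟨a :: U, T, by simp [← hl], by simp [ha, hp], by simp [ha, hn]⟩

theorem forestWord_mDyckRel_filter {P : Set (Set S)} {E : List (Tree S)} (p : Tree S → Bool)
    (hnodup : ((E.filter p).map Tree.label).Nodup)
    (hmem : {X | X ∈ (E.filter p).map Tree.label} ∈ P)
    (hchildren : forestWord ((E.filter p).flatMap Tree.children) ∈ MDyckLang S P) :
    MDyckRel S P (forestWord E) (forestWord (E.filter fun t => !p t)) := by
  obtain ⟨U, T, hE, hp, hn⟩ := exists_split_filter p E
  rw [hp] at hnodup hmem hchildren
  rw [hn, hE, ← cancelTriple_source, ← cancelTriple_target]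
  refine .cancel _ _ ?_ ?_ (dyckRel_forestWord_nil _) ?_ ?_
  · simpa [cancelTriple, Function.comp_def] using hnodup
  · simpa [cancelTriple, Function.comp_def] using hmem
  · intro t ht
    obtain ⟨p, -, rfl⟩ := List.mem_map.1 ht
    exact ⟨dyckRel_forestWord_nil _, dyckRel_forestWord_nil _⟩
  · rw [cancelTriple_inner]
    rw [List.flatMap_map] at hchildren
    exact hchildren

/-- The partition of a set of brackets into the fibers of a map `cls`. -/
def fiberPartition (cls : S → C) : Set (Set S) := (Setoid.ker cls).classes

theorem mem_map_label_filter (p : S → Bool) (E : List (Tree S)) (X : S) :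
    X ∈ (E.filter fun t => p t.label).map Tree.label ↔ X ∈ E.map Tree.label ∧ p X := by
  rw [← List.mem_filter, List.filter_map]
  rfl

theorem forestWord_mem_mDyckLang [DecidableEq C] {cls : S → C} {E : List (Tree S)}
    (hnodup : (E.map Tree.label).Nodup)
    (hclosed : ∀ X Y, cls X = cls Y → X ∈ E.map Tree.label → Y ∈ E.map Tree.label)
    (hchildren : ∀ q, forestWord ((E.filter fun t => cls t.label = q).flatMap Tree.children) ∈
      MDyckLang S (fiberPartition cls)) :
    forestWord E ∈ MDyckLang S (fiberPartition cls) := by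
  induction hlen : E.length using Nat.strong_induction_on generalizing E with
  | _ n ih =>
    subst hlen
    rcases E with _ | ⟨t₀, E₀⟩
    · rw [forestWord]
      exact .refl []
    set E := t₀ :: E₀ with hE
    set p : S → Bool := fun X => cls X = cls t₀.label with hp
    have ht₀ : t₀.label ∈ E.map Tree.label := by simp [hE]
    have hfiber : {X | X ∈ (E.filter fun t => p t.label).map Tree.label} =
        {X | cls X = cls t₀.label} := by
      ext X
      rw [Set.mem_ofPred_eq, mem_map_label_filter, Set.mem_ofPred_eq, hp, decide_eq_true_iff]
      exact and_iff_right_of_imp fun hX => hclosed t₀.label X hX.symm ht₀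
    have hrest :
        forestWord (E.filter fun t => !p t.label) ∈ MDyckLang S (fiberPartition cls) := by
      refine ih _ ?_ (hnodup.sublist (List.filter_sublist.map _)) (fun X Y hXY => ?_)
        (fun q => ?_) rfl
      · rw [List.length_filter_lt_length_iff_exists]
        exact ⟨t₀, by simp [hE], by simp [hp]⟩
      · rw [mem_map_label_filter (fun X => !p X), mem_map_label_filter (fun X => !p X)]
        exact And.imp (hclosed X Y hXY) (by simp [hp, hXY])
      · rw [List.filter_filter]
        by_cases hq : q = cls t₀.label
        · rw [List.filter_eq_nil_iff.2 (by simp [hp, hq]), List.flatMap_nil, forestWord]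
          exact .refl []
        · rw [List.filter_congr (q := fun t => cls t.label = q) (by grind)]
          exact hchildren q
    exact (forestWord_mDyckRel_filter _ (hnodup.sublist (List.filter_sublist.map _))
      (hfiber ▸ ⟨t₀.label, rfl⟩) (hchildren _)).trans hrest

variable [DecidableEq S] [DecidableEq C]

/-- A node evaluation under which all words of the congruence multiple Dyck language of
`fiberPartition cls` vanish. The value of a forest at a path `q₁ ⋯ qₙ` of classes is the number of
nodes labelled `X` minus the number of nodes labelled `Y` among the nodes whose ancestors lie in the
classes `q₁, …, qₙ`. -/
def imbalance (cls : S → C) (X Y σ : S) (v : List C → ℤ) : List C → ℤ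
  | [] => (if σ = X then 1 else 0) - if σ = Y then 1 else 0
  | q :: s => if cls σ = q then v s else 0

/-- A forest is balanced if, at every path of classes, labels of the same class occur equally
often. -/
def Balanced (cls : S → C) (E : List (Tree S)) : Prop :=
  ∀ X Y, cls X = cls Y → evalForest (imbalance cls X Y) E = 0

theorem sum_map_imbalance_nil (cls : S → C) (X Y : S) (l : List (S × (List C → ℤ))) :
    (l.map fun x => imbalance cls X Y x.1 x.2).sum [] =
      (l.map Prod.fst).count X - (l.map Prod.fst).count Y := by
  induction l with
  | nil => simp
  | cons x l ih => simp [ih, imbalance, List.count_cons]; grind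

theorem sum_map_imbalance_cons (cls : S → C) (X Y : S) (q : C) (s : List C)
    (l : List (S × (List C → ℤ))) :
    (l.map fun x => imbalance cls X Y x.1 x.2).sum (q :: s) =
      ((l.filter fun x => cls x.1 = q).map Prod.snd).sum s := by
  induction l with
  | nil => simp
  | cons x l ih => by_cases h : cls x.1 = q <;> simp [ih, imbalance, h]

theorem sum_map_imbalance_eq_zero {cls : S → C} {X Y : S} (hXY : cls X = cls Y)
    {l : List (S × (List C → ℤ))} (hnodup : (l.map Prod.fst).Nodup)
    (hmem : {σ | σ ∈ l.map Prod.fst} ∈ fiberPartition cls) (hsum : (l.map Prod.snd).sum = 0) :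
    (l.map fun x => imbalance cls X Y x.1 x.2).sum = 0 := by
  obtain ⟨Z, hZ⟩ := hmem
  have hfiber (σ : S) : σ ∈ l.map Prod.fst ↔ cls σ = cls Z := Set.ext_iff.1 hZ σ
  funext s
  cases s with
  | nil => simp [sum_map_imbalance_nil, hnodup.count, hfiber, hXY]
  | cons q s =>
    rw [sum_map_imbalance_cons]
    by_cases hq : cls Z = q
    · rw [List.filter_eq_self.2 fun x hx => by
        simpa [← hq] using (hfiber x.1).1 (List.mem_map_of_mem hx), hsum]
      rfl
    · rw [List.filter_eq_nil_iff.2 fun x hx => by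
        simpa [(hfiber x.1).1 (List.mem_map_of_mem hx)] using hq]
      rfl

theorem balanced_of_mem_mDyckLang {cls : S → C} {E : List (Tree S)}
    (hE : forestWord E ∈ MDyckLang S (fiberPartition cls)) : Balanced cls E := by
  intro X Y hXY
  simpa [foldl_evalStep_forestWord] using
    MDyckRel.foldl_evalStep (fun _ => sum_map_imbalance_eq_zero hXY) hE (0, [])

theorem evalForest_imbalance_nil (cls : S → C) (X Y : S) (E : List (Tree S)) :
    evalForest (imbalance cls X Y) E [] =
      (E.map Tree.label).count X - (E.map Tree.label).count Y := by
  rw [evalForest_eq_sum]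
  simpa [Function.comp_def] using sum_map_imbalance_nil cls X Y
    (E.map fun t => (t.label, evalForest (imbalance cls X Y) t.children))

theorem evalForest_imbalance_cons (cls : S → C) (X Y : S) (q : C) (s : List C)
    (E : List (Tree S)) :
    evalForest (imbalance cls X Y) E (q :: s) =
      evalForest (imbalance cls X Y)
        ((E.filter fun t => cls t.label = q).flatMap Tree.children) s := by
  rw [evalForest_eq_sum, evalForest_flatMap]
  simpa [Function.comp_def, List.filter_map] using sum_map_imbalance_cons cls X Y q s
    (E.map fun t => (t.label, evalForest (imbalance cls X Y) t.children))

theorem Balanced.mem_map_label {cls : S → C} {E : List (Tree S)} (hE : Balanced cls E) {X Y : S}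
    (hXY : cls X = cls Y) (hX : X ∈ E.map Tree.label) : Y ∈ E.map Tree.label := by
  have hcount := congrFun (hE X Y hXY) []
  rw [evalForest_imbalance_nil, Pi.zero_apply, sub_eq_zero, Nat.cast_inj] at hcount
  rwa [← List.count_pos_iff, ← hcount, List.count_pos_iff]

theorem Balanced.flatMap_children {cls : S → C} {E : List (Tree S)} (hE : Balanced cls E) (q : C) :
    Balanced cls ((E.filter fun t => cls t.label = q).flatMap Tree.children) := by
  intro X Y hXY
  funext s
  rw [← evalForest_imbalance_cons, hE X Y hXY]
  rfl

end MDyck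

/-! ### Regular languages of bracket words -/

theorem isRegular_setOf_foldlM {α Q : Type} (step : Q → α → Option Q) (q₀ : Q) (F : Set Q)
    (hfin : {q | ∃ p a, step p a = some q}.Finite) :
    IsRegular {w | ∃ q ∈ F, w.foldlM step q₀ = some q} := by
  set L : Language α := {w | ∃ q ∈ F, w.foldlM step q₀ = some q}
  have hreach (w : List α) : w.foldlM step q₀ ∈
      insert none (insert (some q₀) (some '' {q | ∃ p a, step p a = some q})) := by
    induction w using List.reverseRecOn with
    | nil => simp
    | append_singleton w a _ =>
      cases hw : (w ++ [a]).foldlM step q₀ with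
      | none => simp
      | some q =>
        obtain ⟨p, -, hp⟩ := Option.bind_eq_some_iff.1 (List.foldlM_append.symm.trans hw)
        exact .inr (.inr ⟨q, ⟨p, a, by simpa using hp⟩, rfl⟩)
  have hquot (w : List α) : L.leftQuotient w =
      {u | ∃ q ∈ F, ((w.foldlM step q₀).bind fun p => u.foldlM step p) = some q} := by
    ext u
    rw [Language.mem_leftQuotient]
    change (∃ q ∈ F, (w ++ u).foldlM step q₀ = some q) ↔ _
    rw [List.foldlM_append]
    rfl
  obtain ⟨Q', _, M, hM⟩ : L.IsRegular := by
    refine .of_finite_range_leftQuotient (((((hfin.image some).insert (some q₀)).insert none).image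
      fun o => {u | ∃ q ∈ F, (o.bind fun p => u.foldlM step p) = some q}).subset ?_)
    rintro _ ⟨w, rfl⟩
    exact ⟨_, hreach w, (hquot w).symm⟩
  exact ⟨Q', inferInstance, M, fun w => by rw [hM]; rfl⟩

/-- A local typing discipline for forests. A node labelled `X` occupies the slot `slot X`, and its
children must occupy the slots `content X` in this order; `rest x` lists the slots following `x` in
the list in which `x` occurs. -/
structure SlotSystem (B L : Type) where
  slot : B → L
  Valid : B → Prop
  content : B → List L
  rest : L → List L

namespace SlotSystem

variable {B L : Type} (s : SlotSystem B L)

/-- A list of slots in which every slot is followed by the slots that `rest` predicts. -/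
def IsChain : List L → Prop
  | [] => True
  | x :: l => s.rest x = l ∧ IsChain l

/-- The trees that obey the typing discipline at every node. -/
inductive Typed : Tree B → Prop
  | node (X : B) (ts : List (Tree B)) : s.Valid X → ts.map (fun t => s.slot t.label) = s.content X →
      (∀ t ∈ ts, Typed t) → Typed (.node X ts)

open scoped Classical in
/-- One step of an automaton that checks the typing discipline on bracket words. Its state lists the
slots that are still to be filled on the current level. -/
noncomputable def readStep : List L → B ⊕ B → Option (List L)
  | l, .inl X => if l.head? = some (s.slot X) ∧ s.Valid X then some (s.content X) else none
  | l, .inr X => if l = [] then some (s.rest (s.slot X)) else none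

variable {s}

theorem typed_iff {t : Tree B} : s.Typed t ↔
    s.Valid t.label ∧ t.children.map (fun u => s.slot u.label) = s.content t.label ∧
      ∀ u ∈ t.children, s.Typed u := by
  obtain ⟨X, ts⟩ := t
  exact ⟨fun | .node _ _ hX hslot hts => ⟨hX, hslot, hts⟩,
    fun ⟨hX, hslot, hts⟩ => .node X ts hX hslot hts⟩

theorem foldlM_readStep_forestWord (hcontent : ∀ X, s.IsChain (s.content X)) (E : List (Tree B))
    {l : List L} (hl : s.IsChain l) (l' : List L) :
    (forestWord E).foldlM s.readStep l = some l' ↔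
      l = E.map (fun t => s.slot t.label) ++ l' ∧ ∀ t ∈ E, s.Typed t := by
  induction E using forest_induction generalizing l l' with
  | nil => simp [forestWord]
  | cons X ts E ihts ihE =>
    have hword : (forestWord (.node X ts :: E)).foldlM s.readStep l = some l' ↔
        ∃ m, s.readStep l (.inl X) = some m ∧ (forestWord ts).foldlM s.readStep m = some [] ∧
          (forestWord E).foldlM s.readStep (s.rest (s.slot X)) = some l' := by
      simp only [forestWord, List.foldlM_cons, List.foldlM_append, Option.bind_eq_bind,
        Option.bind_eq_some_iff]
      simp [readStep]
    rw [hword]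
    rcases l with _ | ⟨x, l⟩
    · simp [readStep]
    by_cases hX : x = s.slot X ∧ s.Valid X
    · obtain ⟨⟨rfl, hvalid⟩, rfl, hl⟩ := And.intro hX hl
      simp [readStep, hvalid, ihts (hcontent X), ihE hl, typed_iff (t := .node X ts),
        Tree.label, Tree.children]
      grind
    · simp [readStep, typed_iff (t := .node X ts), Tree.label, Tree.children]
      grind

variable (s) in
/-- The words on which `readStep` consumes exactly the slots in `l`. -/
def language (l : List L) : Set (List (B ⊕ B)) :=
  {w | w.foldlM s.readStep l = some []}

theorem isRegular_language [Finite B] (l : List L) : IsRegular (s.language l) := by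
  have hfin : {q | ∃ p a, s.readStep p a = some q}.Finite := by
    refine ((Set.finite_range s.content).union (Set.finite_range fun X => s.rest (s.slot X))).subset
      ?_
    rintro q ⟨p, X | X, hq⟩
    · exact .inl ⟨X, by simp_all [readStep]⟩
    · exact .inr ⟨X, by simp_all [readStep]⟩
  simpa [language] using isRegular_setOf_foldlM s.readStep l {[]} hfin

theorem forestWord_mem_language (hcontent : ∀ X, s.IsChain (s.content X)) {l : List L}
    (hl : s.IsChain l) (E : List (Tree B)) :
    forestWord E ∈ s.language l ↔ E.map (fun t => s.slot t.label) = l ∧ ∀ t ∈ E, s.Typed t := by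
  rw [language, Set.mem_ofPred_eq, foldlM_readStep_forestWord hcontent E hl, List.append_nil,
    eq_comm]

end SlotSystem

/-! ### Positions in a grammar -/

theorem getElem?_eq_none_or_rel {α β : Type} {R : α → β → Prop} {l : List α} {l' : List β}
    (h : List.Forall₂ R l l') (i : ℕ) :
    (l[i]? = none ∧ l'[i]? = none) ∨ ∃ a b, l[i]? = some a ∧ l'[i]? = some b ∧ R a b := by
  induction h generalizing i with
  | nil => simp
  | cons hab _ ih =>
    cases i with
    | zero => simp [hab]
    | succ i => exact ih i

theorem filterMap_getElem?_range {α : Type} (l : List α) :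
    (List.range l.length).filterMap (l[·]?) = l := by
  induction l with
  | nil => rfl
  | cons a l ih => simpa [List.range_succ_eq_map, List.filterMap_map, Function.comp_def] using ih

theorem Production.mem_vars_iff {Δ N : Type} {sortN : N → ℕ} {ρ : Production Δ N sortN}
    (hρ : ρ.NonDeleting) (x : ℕ × ℕ) : x ∈ ρ.vars ↔ ∃ A, ρ.rhs[x.1]? = some A ∧ x.2 < sortN A := by
  constructor
  · intro hx
    obtain ⟨h, hlt⟩ := ρ.wf x hx
    exact ⟨ρ.rhs[x.1], List.getElem?_eq_getElem h, hlt⟩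
  · rintro ⟨A, hA, hlt⟩
    obtain ⟨h, rfl⟩ := List.getElem?_eq_some_iff.1 hA
    exact hρ x.1 h x.2 hlt

namespace MCFG

variable {Δ : Type} {G : MCFG Δ}

variable (G) in
/-- The labels of a derivation: the productions and a virtual start production `none`, whose only
argument is the initial non-terminal. -/
abbrev Label := Option G.P

/-- The non-terminals on the right-hand side of a label. -/
def rhs : G.Label → List G.N
  | none => [G.S]
  | some ρ => ρ.1.rhs

/-- The threads of a label. The thread with index `j + 1` is the `j`-th component of the production,
with the second index of each variable shifted accordingly. The thread with index `0` is a control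
thread that lists thread `0` of every argument, so that a production leaves a trace even if it has
no components. -/
def threads : G.Label → List (List (Δ ⊕ ℕ × ℕ))
  | none => [[.inr (0, 0), .inr (0, 1)]]
  | some ρ => (List.range ρ.1.rhs.length).map (fun i => .inr (i, 0)) ::
      ρ.1.comp.map (List.map (Sum.map id (Prod.map id Nat.succ)))

theorem length_threads_some (ρ : G.P) : (threads (some ρ)).length = G.sortN ρ.1.lhs + 1 := by
  simp [threads, ρ.1.comp_len]

theorem filterMap_flatten_threads_some (ρ : G.P) :
    (threads (some ρ)).flatten.filterMap Sum.getRight? =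
      (List.range ρ.1.rhs.length).map (fun i => (i, 0)) ++
        ρ.1.vars.map (Prod.map id Nat.succ) := by
  have hshift : Sum.getRight? ∘ Sum.map id (Prod.map id Nat.succ) =
      fun x : Δ ⊕ ℕ × ℕ => x.getRight?.map (Prod.map id Nat.succ) := by
    funext x
    cases x <;> rfl
  rw [threads, List.flatten_cons, List.filterMap_append, ← List.map_flatten, List.filterMap_map,
    List.filterMap_map, hshift, ← List.map_filterMap, Production.vars]
  simp [Function.comp_def]

theorem nodup_filterMap_flatten_threads (a : G.Label) :
    ((threads a).flatten.filterMap Sum.getRight?).Nodup := by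
  cases a with
  | none => simp [threads]
  | some ρ =>
    rw [filterMap_flatten_threads_some]
    refine List.Nodup.append (List.nodup_range.map fun i j h => congrArg Prod.fst h)
      (ρ.1.linear.map (Function.injective_id.prodMap Nat.succ_injective)) ?_
    intro x hx hx'
    simp only [List.mem_map] at hx hx'
    grind

theorem mem_filterMap_flatten_threads (hnd : G.NonDeleting) (a : G.Label) (i c : ℕ) :
    (i, c) ∈ (threads a).flatten.filterMap Sum.getRight? ↔
      ∃ A, (rhs a)[i]? = some A ∧ c < G.sortN A + 1 := by
  cases a with
  | none =>
    rcases i with _ | i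
    · simp [threads, rhs, G.sort_S]
      lia
    · simp [threads, rhs]
  | some ρ =>
    rw [filterMap_flatten_threads_some, List.mem_append, rhs]
    cases c with
    | zero => simp [List.getElem?_eq_some_iff]
    | succ c =>
      have := Production.mem_vars_iff (hnd ρ ρ.2) (i, c)
      simp [this]

variable (G) in
/-- The positions of the letters and variables in the threads of the labels of `G`. -/
abbrev Position := Σ (a : G.Label) (j : Fin (threads a).length), Fin (threads a)[j].length

namespace Position

/-- The letter or variable at a position. -/
def item (p : G.Position) : Δ ⊕ ℕ × ℕ := (threads p.1)[p.2.1][p.2.2]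

/-- The thread of the argument that is read at a variable; the value at letters is irrelevant. -/
def threadIdx (p : G.Position) : ℕ := p.item.elim (fun _ => 0) Prod.snd

/-- The source of the item at a position: all variables referring to the same argument share a
site, whereas a letter is a site of its own. -/
def site (p : G.Position) : G.Label × ℕ ⊕ G.Position :=
  p.item.elim (fun _ => .inr p) fun x => .inl (p.1, x.1)

/-- The positions following a given one in its thread. -/
def rest (p : G.Position) : List G.Position :=
  ((List.finRange _).drop (p.2.2 + 1)).map fun k => ⟨p.1, p.2.1, k⟩

theorem site_eq_inr {p : G.Position} {δ : Δ} (hp : p.item = .inl δ) : p.site = .inr p := by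
  rw [site, hp, Sum.elim_inl]

theorem site_eq_inl {p : G.Position} {x : ℕ × ℕ} (hp : p.item = .inr x) :
    p.site = .inl (p.1, x.1) := by
  rw [site, hp, Sum.elim_inr]

theorem threadIdx_eq {p : G.Position} {x : ℕ × ℕ} (hp : p.item = .inr x) : p.threadIdx = x.2 := by
  rw [threadIdx, hp, Sum.elim_inr]

end Position

/-- The positions in thread `j` of the label `a`, in their order; there are none if `a` has no
thread `j`. -/
def positions (a : G.Label) (j : ℕ) : List G.Position :=
  if h : j < (threads a).length then (List.finRange _).map fun k => ⟨a, ⟨j, h⟩, k⟩ else []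

/-- The positions in all threads of the label `a`. -/
def allPositions (a : G.Label) : List G.Position :=
  (List.range (threads a).length).flatMap (positions a)

theorem map_item_positions (a : G.Label) (j : ℕ) :
    (positions a j).map Position.item = (threads a).getD j [] := by
  unfold positions
  split_ifs with h
  · rw [List.map_map, List.getD_eq_getElem _ _ h]
    exact List.map_getElem_finRange _
  · rw [List.getD_eq_default _ _ (not_lt.1 h), List.map_nil]

theorem mem_positions_iff {a : G.Label} {j : ℕ} {p : G.Position} :
    p ∈ positions a j ↔ p.1 = a ∧ p.2.1 = j := by
  unfold positions
  split_ifs with h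
  · refine ⟨fun hp => ?_, ?_⟩
    · obtain ⟨k, -, rfl⟩ := List.mem_map.1 hp
      exact ⟨rfl, rfl⟩
    · rintro ⟨rfl, rfl⟩
      exact List.mem_map.2 ⟨p.2.2, List.mem_finRange _, rfl⟩
  · rw [iff_false_intro List.not_mem_nil, false_iff]
    rintro ⟨rfl, rfl⟩
    exact h p.2.1.2

theorem mem_allPositions_iff {a : G.Label} {p : G.Position} : p ∈ allPositions a ↔ p.1 = a := by
  simp only [allPositions, List.mem_flatMap, mem_positions_iff, List.mem_range]
  exact ⟨fun ⟨_, _, h, _⟩ => h, fun h => ⟨p.2.1, h ▸ p.2.1.2, h, rfl⟩⟩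

theorem nodup_positions (a : G.Label) (j : ℕ) : (positions a j).Nodup := by
  unfold positions
  split_ifs with h
  · exact (List.nodup_finRange _).map fun k k' h => by simpa using h
  · exact List.nodup_nil

theorem nodup_allPositions (a : G.Label) : (allPositions a).Nodup := by
  refine List.nodup_flatMap.2 ⟨fun j _ => nodup_positions a j, List.nodup_range.imp ?_⟩
  intro j k hjk p hp hp'
  exact hjk ((mem_positions_iff.1 hp).2.symm.trans (mem_positions_iff.1 hp').2)

theorem map_item_allPositions (a : G.Label) :
    (allPositions a).map Position.item = (threads a).flatten := by
  rw [allPositions, List.map_flatMap]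
  simp only [map_item_positions, List.flatMap_def]
  refine congrArg List.flatten (List.ext_getElem (by simp) fun j h _ => ?_)
  simp at h
  simp [h]

open scoped Classical in
theorem map_threadIdx_filter_site {a : G.Label} {L : List G.Position} (hL : ∀ p ∈ L, p.1 = a)
    (i : ℕ) :
    (L.filter fun p => p.site = .inl (a, i)).map Position.threadIdx =
      (((L.map Position.item).filterMap Sum.getRight?).filter fun x => x.1 = i).map Prod.snd := by
  induction L with
  | nil => rfl
  | cons p L ih =>
    rw [List.forall_mem_cons] at hL
    rw [List.map_cons, List.filter_cons, List.filterMap_cons]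
    cases hp : p.item with
    | inl δ => simp [Position.site_eq_inr hp, ih hL.2]
    | inr x =>
      by_cases hx : x.1 = i <;>
        simp [Position.site_eq_inl hp, Position.threadIdx_eq hp, hL.1, hx, ih hL.2]

open scoped Classical in
theorem map_threadIdx_filter_site_perm {a : G.Label} {L : List G.Position} (hnd : G.NonDeleting)
    (hL : L.Perm (allPositions a)) {i : ℕ} {A : G.N} (hA : (rhs a)[i]? = some A) :
    ((L.filter fun p => p.site = .inl (a, i)).map Position.threadIdx).Perm
      (List.range (G.sortN A + 1)) := by
  rw [map_threadIdx_filter_site fun p hp => mem_allPositions_iff.1 (hL.mem_iff.1 hp)]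
  have hvars := (hL.map Position.item).filterMap Sum.getRight?
  rw [map_item_allPositions] at hvars
  refine (List.perm_ext_iff_of_nodup (List.Nodup.map_on ?_ ?_) List.nodup_range).2 fun c => ?_
  · simp only [List.mem_filter, decide_eq_true_eq]
    exact fun x hx y hy h => Prod.ext (hx.2.trans hy.2.symm) h
  · exact (hvars.nodup_iff.2 (nodup_filterMap_flatten_threads a)).filter _
  · have hmem := hvars.mem_iff.trans (mem_filterMap_flatten_threads hnd a i c)
    rw [hA] at hmem
    simpa [-List.mem_filterMap, hmem] using hmem

theorem flatMap_positions_perm {ρ : G.P} {ps : List G.Position}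
    (hps : (ps.map Position.threadIdx).Perm (List.range (G.sortN ρ.1.lhs + 1))) :
    (ps.flatMap fun p => positions (some ρ) p.threadIdx).Perm (allPositions (some ρ)) := by
  rw [allPositions, length_threads_some, ← List.flatMap_map]
  exact hps.flatMap_right _

/-! ### The encoding of derivations -/

variable (G) in
/-- Trees over the productions that may be used in `G`, well-sorted or not. -/
abbrev DerivTree := Tree (Production Δ G.N G.sortN)

@[elab_as_elim]
theorem derivation_induction {motive : G.N → G.DerivTree → Prop}
    (node : ∀ (ρ : G.P) ts, List.Forall₂ (WFDeriv G.P) (rhs (some ρ)) ts →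
      List.Forall₂ motive (rhs (some ρ)) ts → motive ρ.1.lhs (.node ρ.1 ts))
    {A : G.N} {t : G.DerivTree} (h : WFDeriv G.P A t) : motive A t := by
  induction h with
  | node ρ ts hρ hlen hts ih =>
    exact node ⟨ρ, hρ⟩ ts (List.forall₂_iff_get.2 ⟨hlen.symm, fun i h₁ h₂ => hts i h₂ h₁⟩)
      (List.forall₂_iff_get.2 ⟨hlen.symm, fun i h₁ h₂ => ih i h₂ h₁⟩)

theorem wfDeriv_node {ρ : G.P} {ts : List G.DerivTree}
    (hts : List.Forall₂ (WFDeriv G.P) (rhs (some ρ)) ts) : WFDeriv G.P ρ.1.lhs (.node ρ.1 ts) :=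
  .node ρ.1 ts ρ.2 hts.length_eq.symm fun _ h₁ h₂ => hts.get h₂ h₁

namespace Position

variable {α β : Type}

/-- The element of a list of arguments to which the variable at a position refers. -/
def argument (l : List α) (p : G.Position) : Option α :=
  p.item.elim (fun _ => none) fun x => l[x.1]?

theorem argument_map (f : α → β) (l : List α) (p : G.Position) :
    p.argument (l.map f) = (p.argument l).map f := by
  unfold argument
  cases p.item <;> simp

theorem argument_of_site_eq_inl {p : G.Position} {a : G.Label} {i : ℕ} (hp : p.site = .inl (a, i))
    (l : List α) : p.argument l = l[i]? := by
  unfold site at hp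
  unfold argument
  cases hitem : p.item <;> simp_all

theorem argument_of_site_eq_inr {p q : G.Position} (hp : p.site = .inr q) (l : List α) :
    p.argument l = none := by
  unfold site at hp
  unfold argument
  cases hitem : p.item <;> simp_all

theorem argument_eq_some_iff {p : G.Position} {l : List α} {b : α} :
    p.argument l = some b ↔ ∃ i, p.site = .inl (p.1, i) ∧ l[i]? = some b := by
  unfold site argument
  cases hitem : p.item <;> simp

theorem argument_eq_of_site_eq {p q : G.Position} (h : p.site = q.site) (l : List α) :
    p.argument l = q.argument l := by
  cases hq : q.site with
  | inl x => rw [argument_of_site_eq_inl hq, argument_of_site_eq_inl (h.trans hq)]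
  | inr r => rw [argument_of_site_eq_inr hq, argument_of_site_eq_inr (h.trans hq)]

theorem fst_eq_of_site_eq {p q : G.Position} (h : p.site = q.site) : p.1 = q.1 := by
  unfold site at h
  cases hp : p.item <;> cases hq : q.item <;> simp_all

theorem argument_eq_none_or_rel {R : α → β → Prop} {l : List α}
    {l' : List β} (h : List.Forall₂ R l l') (p : G.Position) :
    (p.argument l = none ∧ p.argument l' = none) ∨
      ∃ a b, p.argument l = some a ∧ p.argument l' = some b ∧ R a b := by
  unfold argument
  cases p.item with
  | inl _ => exact .inl ⟨rfl, rfl⟩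
  | inr x => exact getElem?_eq_none_or_rel h x.1

theorem exists_rel_of_argument_eq_some {R : α → β → Prop} {l : List α}
    {l' : List β} (h : List.Forall₂ R l l') {p : G.Position} {b : β} (hb : p.argument l' = some b) :
    ∃ a, R a b := by
  obtain ⟨-, hnone⟩ | ⟨a, b', -, hb', hab⟩ := argument_eq_none_or_rel h p
  · simp [hnone] at hb
  · obtain rfl := Option.some.inj (hb.symm.trans hb')
    exact ⟨a, hab⟩

end Position

variable (G) in
/-- The brackets of the encoding: the positions, each annotated with the production that is
expanded there (`none` at letters). -/
abbrev Symbol := G.Position × Option G.P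

/-- The class of a bracket. A class consists of all brackets that refer to the same argument and
expand it by the same production, or of a single bracket at a letter. -/
def symbolClass (X : G.Symbol) : (G.Label × ℕ ⊕ G.Position) × Option G.P := (X.1.site, X.2)

variable (G) in
/-- The typing discipline of the encoding: the bracket `(p, some ρ)` encloses the thread of `ρ` that
is read at `p`, where `ρ` must expand the non-terminal at `p`. -/
def slotSystem : SlotSystem G.Symbol G.Position where
  slot := Prod.fst
  Valid X := X.2.map (fun ρ => ρ.1.lhs) = X.1.argument (rhs X.1.1)
  content X := X.2.elim [] fun ρ => positions (some ρ) X.1.threadIdx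
  rest := Position.rest

theorem isChain_positions (a : G.Label) (j : ℕ) : (slotSystem G).IsChain (positions a j) := by
  unfold positions
  split_ifs with h
  · suffices hdrop : ∀ (l : List (Fin (threads a)[j].length)) k, (List.finRange _).drop k = l →
        (slotSystem G).IsChain (l.map fun k => (⟨a, ⟨j, h⟩, k⟩ : G.Position)) from hdrop _ 0 rfl
    intro l
    induction l with
    | nil => exact fun _ _ => trivial
    | cons m l ih =>
      intro k hk
      have hlt : k < (List.finRange (threads a)[j].length).length := by
        by_contra hge
        simp [List.drop_eq_nil_of_le (not_lt.1 hge)] at hk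
      rw [List.drop_eq_getElem_cons hlt, List.cons.injEq] at hk
      obtain ⟨rfl, rfl⟩ := hk
      exact ⟨by simp [slotSystem, Position.rest], ih _ rfl⟩
  · trivial

theorem isChain_content (X : G.Symbol) : (slotSystem G).IsChain ((slotSystem G).content X) := by
  obtain ⟨p, _ | ρ⟩ := X
  · trivial
  · exact isChain_positions _ _

open scoped Classical in
/-- A production as a label of `G`; the value `none` for productions that do not belong to `G` is
irrelevant. -/
noncomputable def toLabel (ρ : Production Δ G.N G.sortN) : G.Label :=
  if h : ρ ∈ G.P then some ⟨ρ, h⟩ else none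

@[simp]
theorem toLabel_coe (ρ : G.P) : toLabel ρ.1 = some ρ := dif_pos ρ.2

/-- The bracket tree of a letter. -/
def leaf (p : G.Position) : Tree G.Symbol := .node (p, none) []

/-- The bracket tree of a derivation that is inserted for the variable at a given position: it
encodes the thread of the derivation that is read there. -/
noncomputable def expand : G.DerivTree → G.Position → Tree G.Symbol
  | .node ρ ts => fun p => .node (p, toLabel ρ) <|
      ((slotSystem G).content (p, toLabel ρ)).map fun q =>
        (q.argument (ts.attach.map fun t => expand t.1)).elim (leaf q) fun f => f q
decreasing_by simp_wf; have := List.sizeOf_lt_of_mem t.2; lia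

/-- The bracket tree at a position of a label whose arguments are the derivations `ts`. -/
noncomputable def expandItem (ts : List G.DerivTree) (p : G.Position) : Tree G.Symbol :=
  (p.argument ts).elim (leaf p) fun t => expand t p

theorem expand_node (ρ : Production Δ G.N G.sortN) (ts : List G.DerivTree) (p : G.Position) :
    expand (.node ρ ts) p =
      .node (p, toLabel ρ) (((slotSystem G).content (p, toLabel ρ)).map (expandItem ts)) := by
  rw [expand, List.attach_map_val]
  refine congrArg (Tree.node _) (List.map_congr_left fun q _ => ?_)
  rw [Position.argument_map, expandItem]
  cases q.argument ts <;> rfl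

theorem children_expand (ρ : G.P) (ts : List G.DerivTree) (p : G.Position) :
    (expand (.node ρ.1 ts) p).children = (positions (some ρ) p.threadIdx).map (expandItem ts) := by
  rw [expand_node, toLabel_coe]
  rfl

theorem label_expandItem (ts : List G.DerivTree) (p : G.Position) :
    (expandItem ts p).label = (p, (p.argument ts).bind fun t => toLabel t.label) := by
  rw [expandItem]
  cases p.argument ts with
  | none => rfl
  | some t =>
    cases t
    simp [expand_node, Tree.label]

/-- The encoding of a derivation as a forest of brackets: the expansion of the only thread of the
virtual start production. -/
noncomputable def encode (d : G.DerivTree) : List (Tree G.Symbol) :=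
  (positions none 0).map (expandItem [d])

theorem map_slot_label_expandItem (ts : List G.DerivTree) (L : List G.Position) :
    (L.map (expandItem ts)).map (fun t => (slotSystem G).slot t.label) = L := by
  simp [Function.comp_def, label_expandItem, slotSystem]

/-! ### Encoded derivations are typed -/

theorem typed_expandItem {a : G.Label} {ts : List G.DerivTree}
    (hts : List.Forall₂ (fun A t => ∀ p : G.Position, p.argument (rhs p.1) = some A →
      (slotSystem G).Typed (expand t p)) (rhs a) ts) {q : G.Position} (hq : q.1 = a) :
    (slotSystem G).Typed (expandItem ts q) := by
  subst hq
  rw [expandItem]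
  obtain ⟨hrhs, harg⟩ | ⟨A, t, hrhs, harg, ht⟩ := Position.argument_eq_none_or_rel hts q
  · rw [harg]
    exact .node _ _ hrhs.symm rfl (by simp)
  · rw [harg]
    exact ht q hrhs

theorem typed_expand {A : G.N} {t : G.DerivTree} (ht : WFDeriv G.P A t) :
    ∀ p : G.Position, p.argument (rhs p.1) = some A → (slotSystem G).Typed (expand t p) := by
  refine derivation_induction (fun ρ ts _ ih p hp => ?_) ht
  rw [expand_node, toLabel_coe]
  refine .node _ _ hp.symm (map_slot_label_expandItem ts _) fun u hu => ?_
  obtain ⟨q, hq, rfl⟩ := List.mem_map.1 hu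
  exact typed_expandItem ih (mem_positions_iff.1 hq).1

theorem forall₂_rhs_none_iff {R : G.N → G.DerivTree → Prop}
    {d : G.DerivTree} : List.Forall₂ R (rhs none) [d] ↔ R G.S d := by
  simp [rhs]

theorem typed_of_mem_encode {d : G.DerivTree} (hd : d ∈ G.Derivs) :
    ∀ t ∈ encode d, (slotSystem G).Typed t := by
  intro u hu
  obtain ⟨q, hq, rfl⟩ := List.mem_map.1 hu
  exact typed_expandItem (forall₂_rhs_none_iff.2 (typed_expand hd)) (mem_positions_iff.1 hq).1

/-! ### Encoded derivations cancel -/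

/-- The brackets enclosed by the expansions of `t` cancel whenever every thread of `t` is read at
exactly one position. -/
def InteriorCancels (A : G.N) (t : G.DerivTree) : Prop :=
  ∀ ps : List G.Position, (ps.map Position.threadIdx).Perm (List.range (G.sortN A + 1)) →
    forestWord (ps.flatMap fun p => (expand t p).children) ∈
      MDyckLang G.Symbol (fiberPartition symbolClass)

theorem mem_map_label_expandItem_of_symbolClass_eq {a : G.Label}
    {ts : List G.DerivTree} {L : List G.Position}
    (hL : L.Perm (allPositions a)) {X Y : G.Symbol} (hXY : symbolClass X = symbolClass Y)
    (hX : X ∈ (L.map (expandItem ts)).map Tree.label) :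
    Y ∈ (L.map (expandItem ts)).map Tree.label := by
  obtain ⟨hsite, hfill⟩ := Prod.ext_iff.1 hXY
  simp only [List.map_map, List.mem_map, hL.mem_iff, mem_allPositions_iff, Function.comp_apply,
    label_expandItem] at hX ⊢
  obtain ⟨p, hp, rfl⟩ := hX
  refine ⟨Y.1, (Position.fst_eq_of_site_eq hsite).symm.trans hp, Prod.ext rfl ?_⟩
  rw [← Position.argument_eq_of_site_eq hsite]
  exact hfill

open scoped Classical in
theorem filter_map_expandItem [DecidableEq ((G.Label × ℕ ⊕ G.Position) × Option G.P)]
    (ts : List G.DerivTree) (L : List G.Position)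
    (q : (G.Label × ℕ ⊕ G.Position) × Option G.P) :
    ((L.map (expandItem ts)).filter fun t => symbolClass t.label = q) =
        (L.filter fun p => p.site = q.1).map (expandItem ts) ∨
      ((L.map (expandItem ts)).filter fun t => symbolClass t.label = q) = [] := by
  by_cases hq : ∃ p : G.Position, (p.site, (p.argument ts).bind fun t => toLabel t.label) = q
  · obtain ⟨p, rfl⟩ := hq
    refine .inl ?_
    rw [List.filter_map]
    refine congrArg _ (List.filter_congr fun p' _ => ?_)
    simp only [Function.comp_apply, symbolClass, label_expandItem, Prod.mk.injEq]
    exact decide_eq_decide.2 (and_iff_left_of_imp fun hp' => by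
      rw [Position.argument_eq_of_site_eq hp'])
  · refine .inr (List.filter_eq_nil_iff.2 fun t ht => ?_)
    obtain ⟨p, -, rfl⟩ := List.mem_map.1 ht
    simpa [symbolClass, label_expandItem] using not_exists.1 hq p

open scoped Classical in
theorem forestWord_map_expandItem_mem_mDyckLang (hnd : G.NonDeleting) {a : G.Label}
    {ts : List G.DerivTree} (hts : List.Forall₂ InteriorCancels (rhs a) ts)
    {L : List G.Position} (hL : L.Perm (allPositions a)) :
    forestWord (L.map (expandItem ts)) ∈ MDyckLang G.Symbol (fiberPartition symbolClass) := by
  have hnil : forestWord [] ∈ MDyckLang G.Symbol (fiberPartition symbolClass) := by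
    rw [forestWord]
    exact .refl []
  refine forestWord_mem_mDyckLang (.of_map Prod.fst ?_)
    (fun X Y => mem_map_label_expandItem_of_symbolClass_eq hL) ?_
  · rw [List.map_map]
    exact (map_slot_label_expandItem ts L).symm ▸ hL.nodup_iff.2 (nodup_allPositions a)
  intro c
  obtain h | h := filter_map_expandItem ts L c
  swap
  · rwa [h, List.flatMap_nil]
  rw [h, List.flatMap_map]
  by_cases hs : ∃ p ∈ L, p.site = c.1 ∧ ∃ t, p.argument ts = some t
  · obtain ⟨p, hp, hpc, t, ht⟩ := hs
    obtain ⟨i, hi, hti⟩ := Position.argument_eq_some_iff.1 ht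
    obtain ⟨A, hA, hAt⟩ : ∃ A, (rhs a)[i]? = some A ∧ InteriorCancels A t := by
      simpa [hti] using getElem?_eq_none_or_rel hts i
    rw [← hpc, hi, mem_allPositions_iff.1 (hL.mem_iff.1 hp)]
    convert hAt _ (map_threadIdx_filter_site_perm hnd hL hA) using 2
    refine List.flatMap_congr fun q hq => ?_
    rw [expandItem, Position.argument_of_site_eq_inl (by simpa using (List.mem_filter.1 hq).2),
      hti, Option.elim_some]
  · rwa [List.flatMap_eq_nil_iff.2]
    intro p hp
    obtain ⟨hpL, hps⟩ := by simpa using hp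
    rw [expandItem, Option.eq_none_iff_forall_ne_some.2
      fun t ht => hs ⟨p, hpL, hps, t, ht⟩]
    rfl

theorem interiorCancels (hnd : G.NonDeleting) {A : G.N} {t : G.DerivTree}
    (ht : WFDeriv G.P A t) : InteriorCancels A t := by
  refine derivation_induction (fun ρ ts _ ih ps hps => ?_) ht
  simp only [children_expand, ← List.map_flatMap]
  exact forestWord_map_expandItem_mem_mDyckLang hnd ih (flatMap_positions_perm hps)

theorem positions_none_zero_eq : positions (G := G) none 0 = allPositions none := by
  simp [allPositions, threads]

theorem forestWord_encode_mem_mDyckLang (hnd : G.NonDeleting)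
    {d : G.DerivTree} (hd : d ∈ G.Derivs) :
    forestWord (encode d) ∈ MDyckLang G.Symbol (fiberPartition symbolClass) :=
  forestWord_map_expandItem_mem_mDyckLang hnd (forall₂_rhs_none_iff.2 (interiorCancels hnd hd))
    (positions_none_zero_eq ▸ .refl _)

theorem forestWord_encode_mem_language {d : G.DerivTree} (hd : d ∈ G.Derivs) :
    forestWord (encode d) ∈ (slotSystem G).language (positions none 0) :=
  (SlotSystem.forestWord_mem_language isChain_content (isChain_positions none 0) _).2
    ⟨map_slot_label_expandItem _ _, typed_of_mem_encode hd⟩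

/-! ### Typed cancelling forests are encoded derivations -/

open scoped Classical in
/-- A forest whose roots occupy, in any order, all positions of the label `a`, and which is typed
and balanced. -/
structure IsCancelling (a : G.Label) (E : List (Tree G.Symbol)) : Prop where
  slots : (E.map fun t => t.label.1).Perm (allPositions a)
  typed : ∀ t ∈ E, (slotSystem G).Typed t
  balanced : Balanced symbolClass E

namespace IsCancelling

variable {a : G.Label} {E : List (Tree G.Symbol)} {i : ℕ} {A : G.N}

theorem label_fst (hE : IsCancelling a E) {t : Tree G.Symbol} (ht : t ∈ E) : t.label.1.1 = a :=
  mem_allPositions_iff.1 (hE.slots.mem_iff.1 (List.mem_map_of_mem ht))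

theorem exists_site_eq (hE : IsCancelling a E) (hnd : G.NonDeleting) (hA : (rhs a)[i]? = some A) :
    ∃ t ∈ E, t.label.1.site = .inl (a, i) := by
  have hcontrol : (i, 0) ∈ (threads a).flatten.filterMap Sum.getRight? :=
    (mem_filterMap_flatten_threads hnd a i 0).2 ⟨A, hA, Nat.succ_pos _⟩
  rw [← map_item_allPositions, List.filterMap_map, List.mem_filterMap] at hcontrol
  obtain ⟨p, hp, hitem⟩ := hcontrol
  obtain ⟨t, ht, rfl⟩ := List.mem_map.1 (hE.slots.mem_iff.2 hp)
  exact ⟨t, ht, by rw [Position.site_eq_inl (Sum.getRight?_eq_some_iff.1 hitem), hE.label_fst ht]⟩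

theorem exists_label_eq (hE : IsCancelling a E) (hnd : G.NonDeleting)
    (hA : (rhs a)[i]? = some A) :
    ∃ ρ : G.P, ρ.1.lhs = A ∧ ∀ t ∈ E, t.label.1.site = .inl (a, i) →
      t.label = (t.label.1, some ρ) := by
  classical
  obtain ⟨t₀, ht₀, hsite⟩ := hE.exists_site_eq hnd hA
  have hvalid : t₀.label.2.map (fun ρ => ρ.1.lhs) = some A := by
    refine (SlotSystem.typed_iff.1 (hE.typed _ ht₀)).1.trans ?_
    rw [Position.argument_of_site_eq_inl hsite, hE.label_fst ht₀, hA]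
  obtain ⟨ρ, hρ, hlhs⟩ := Option.map_eq_some_iff.1 hvalid
  refine ⟨ρ, hlhs, fun t ht hts => ?_⟩
  have hclass : symbolClass t₀.label = symbolClass (t.label.1, some ρ) :=
    Prod.ext (hsite.trans hts.symm) hρ
  obtain ⟨u, hu, hlabel⟩ :=
    List.mem_map.1 (hE.balanced.mem_map_label hclass (List.mem_map_of_mem ht₀))
  have hut : u = t := List.inj_on_of_nodup_map
    (hE.slots.nodup_iff.2 (nodup_allPositions a)) hu ht (by rw [hlabel])
  rw [← hut, hlabel]

open scoped Classical in
theorem flatMap_children (hE : IsCancelling a E) (hnd : G.NonDeleting) {ρ : G.P}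
    (hρ : (rhs a)[i]? = some ρ.1.lhs)
    (hlabel : ∀ t ∈ E, t.label.1.site = .inl (a, i) → t.label = (t.label.1, some ρ)) :
    IsCancelling (some ρ)
      ((E.filter fun t => t.label.1.site = .inl (a, i)).flatMap Tree.children) where
  slots := by
    have hreads := map_threadIdx_filter_site_perm hnd hE.slots hρ
    rw [List.filter_map] at hreads
    convert flatMap_positions_perm hreads using 1
    rw [List.map_flatMap, List.flatMap_map]
    refine List.flatMap_congr fun t ht => ?_
    obtain ⟨ht, hsite⟩ := by simpa using ht
    refine (SlotSystem.typed_iff.1 (hE.typed t ht)).2.1.trans ?_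
    rw [hlabel t ht hsite]
    rfl
  typed u hu := by
    obtain ⟨t, ht, hut⟩ := List.mem_flatMap.1 hu
    exact (SlotSystem.typed_iff.1 (hE.typed t (List.mem_filter.1 ht).1)).2.2 u hut
  balanced := by
    convert hE.balanced.flatMap_children (.inl (a, i), some ρ) using 2
    refine List.filter_congr fun t ht => decide_eq_decide.2 ⟨fun hsite => ?_, congrArg Prod.fst⟩
    exact Prod.ext hsite (congrArg (fun X : G.Symbol => X.2) (hlabel t ht hsite))

end IsCancelling

theorem eq_node_of_forall_mem_children {t : Tree G.Symbol} (ht : (slotSystem G).Typed t)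
    {ts : List G.DerivTree}
    (hchildren : ∀ u ∈ t.children, u = expandItem ts u.label.1) :
    t = .node t.label (((slotSystem G).content t.label).map (expandItem ts)) := by
  rw [← (SlotSystem.typed_iff.1 ht).2.1, List.map_map]
  obtain ⟨X, us⟩ := t
  exact congrArg (Tree.node X) ((List.map_congr_left hchildren).symm.trans (List.map_id us)).symm

theorem eq_leaf_of_typed {t : Tree G.Symbol} (ht : (slotSystem G).Typed t)
    (harg : t.label.1.argument (rhs t.label.1.1) = none) : t = leaf t.label.1 := by
  obtain ⟨⟨p, ρ⟩, us⟩ := t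
  obtain ⟨hvalid, hcontent, -⟩ := SlotSystem.typed_iff.1 ht
  obtain rfl : ρ = none := Option.map_eq_none_iff.1 (hvalid.trans harg)
  obtain rfl : us = [] := List.map_eq_nil_iff.1 hcontent
  rfl

theorem exists_forall₂_expandItem {a : G.Label} {E : List (Tree G.Symbol)}
    (hE : IsCancelling a E) (hargs : ∀ i A, (rhs a)[i]? = some A →
      ∃ t, WFDeriv G.P A t ∧ ∀ u ∈ E, u.label.1.site = .inl (a, i) → u = expand t u.label.1) :
    ∃ ts, List.Forall₂ (WFDeriv G.P) (rhs a) ts ∧ ∀ u ∈ E, u = expandItem ts u.label.1 := by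
  choose t ht hexpand using hargs
  set ts := List.ofFn fun i : Fin (rhs a).length => t i _ (List.getElem?_eq_getElem i.2) with hts
  have hforall : List.Forall₂ (WFDeriv G.P) (rhs a) ts :=
    List.forall₂_iff_get.2 ⟨by simp [hts], fun i h₁ h₂ => by simpa [hts] using ht i _ _⟩
  refine ⟨ts, hforall, fun u hu => ?_⟩
  rw [expandItem]
  obtain ⟨hrhs, harg⟩ | ⟨A, d, -, harg, -⟩ :=
    Position.argument_eq_none_or_rel hforall u.label.1
  · rw [harg]
    exact eq_leaf_of_typed (hE.typed u hu) (by rwa [hE.label_fst hu])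
  · obtain ⟨i, hi, hd⟩ := Position.argument_eq_some_iff.1 harg
    obtain ⟨h, rfl⟩ := List.getElem?_eq_some_iff.1 hd
    rw [hE.label_fst hu] at hi
    rw [harg, Option.elim_some]
    simpa [hts] using hexpand i _ _ u hu hi

theorem IsCancelling.exists_arguments (hnd : G.NonDeleting) {a : G.Label}
    {E : List (Tree G.Symbol)} (hE : IsCancelling a E) :
    ∃ ts, List.Forall₂ (WFDeriv G.P) (rhs a) ts ∧ ∀ u ∈ E, u = expandItem ts u.label.1 := by
  classical
  suffices hbound : ∀ n a E, IsCancelling (G := G) a E → (∀ t ∈ E, sizeOf t < n) →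
      ∃ ts, List.Forall₂ (WFDeriv G.P) (rhs a) ts ∧ ∀ u ∈ E, u = expandItem ts u.label.1 from
    hbound (sizeOf E) a E hE fun _ => List.sizeOf_lt_of_mem
  intro n
  induction n with
  | zero =>
    refine fun a E hE hsize => exists_forall₂_expandItem hE fun i A hA => ?_
    obtain ⟨t, ht, -⟩ := hE.exists_site_eq hnd hA
    exact absurd (hsize t ht) (Nat.not_lt_zero _)
  | succ n ih =>
    refine fun a E hE hsize => exists_forall₂_expandItem hE fun i A hA => ?_
    obtain ⟨ρ, rfl, hlabel⟩ := hE.exists_label_eq hnd hA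
    obtain ⟨ts, hts, hchildren⟩ := ih _ _ (hE.flatMap_children hnd hA hlabel) fun u hu => by
      obtain ⟨t, ht, hut⟩ := List.mem_flatMap.1 hu
      exact (Tree.sizeOf_lt_of_mem_children hut).trans_le
        (Nat.le_of_lt_succ (hsize t (List.mem_filter.1 ht).1))
    refine ⟨.node ρ.1 ts, wfDeriv_node hts, fun t ht hsite => ?_⟩
    rw [expand_node, toLabel_coe, ← hlabel t ht hsite]
    exact eq_node_of_forall_mem_children (hE.typed t ht) fun u hu =>
      hchildren u (List.mem_flatMap.2 ⟨t, List.mem_filter.2 ⟨ht, by simpa using hsite⟩, hu⟩)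

theorem exists_encode_eq (hnd : G.NonDeleting) {w : List (G.Symbol ⊕ G.Symbol)}
    (hlang : w ∈ (slotSystem G).language (positions none 0))
    (hmem : w ∈ MDyckLang G.Symbol (fiberPartition symbolClass)) :
    ∃ d ∈ G.Derivs, forestWord (encode d) = w := by
  classical
  obtain ⟨E, rfl⟩ : w ∈ Set.range forestWord :=
    dyckLang_eq_range_forestWord ▸ MDyckRel.dyckRel hmem
  obtain ⟨hslot, htyped⟩ := (SlotSystem.forestWord_mem_language isChain_content
    (isChain_positions none 0) E).1 hlang
  have hE : IsCancelling none E :=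
    ⟨by rw [← positions_none_zero_eq, ← hslot]; rfl, htyped, balanced_of_mem_mDyckLang hmem⟩
  obtain ⟨ts, hts, hexpand⟩ := hE.exists_arguments hnd
  obtain ⟨d, _, hd, h, rfl⟩ := List.forall₂_cons_left_iff.1 hts
  obtain rfl := List.forall₂_nil_left_iff.1 h
  refine ⟨d, hd, congrArg forestWord ?_⟩
  rw [encode, ← hslot, List.map_map]
  exact (List.map_congr_left hexpand).symm.trans (List.map_id E)

/-! ### The encoding preserves yields and is injective -/

/-- The homomorphism that reads the letter off the opening bracket of a letter position and erases
every other bracket. -/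
def eraseBracket : G.Symbol ⊕ G.Symbol → Option Δ :=
  Sum.elim (fun X => X.1.item.getLeft?) fun _ => none

/-- The words produced by the threads of a derivation: the control thread produces no letters, and
the others produce the components of the yield. -/
def threadYields (t : G.DerivTree) : List (List Δ) := [] :: t.yield

theorem getD_zero_threadYields (ts : List G.DerivTree) (i : ℕ) :
    ((ts.map threadYields).getD i []).getD 0 [] = [] := by
  rw [List.getD_eq_getElem?_getD (l := ts.map threadYields), List.getElem?_map]
  cases ts[i]? <;> rfl

theorem getD_succ_threadYields (ts : List G.DerivTree) (i j : ℕ) :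
    ((ts.map threadYields).getD i []).getD (j + 1) [] =
      ((ts.map Tree.yield).getD i []).getD j [] := by
  rw [List.getD_eq_getElem?_getD (l := ts.map threadYields), List.getElem?_map,
    List.getD_eq_getElem?_getD (l := ts.map Tree.yield), List.getElem?_map]
  cases ts[i]? <;> rfl

theorem threadYields_node (ρ : G.P) (ts : List G.DerivTree) :
    threadYields (.node ρ.1 ts) = (threads (some ρ)).map (subst (ts.map threadYields)) := by
  rw [threadYields, threads, List.map_cons, Tree.yield, List.map_map, List.attach_map_val]
  congr 1
  · simp [-List.getD_eq_getElem?_getD, subst, List.flatMap_map, getD_zero_threadYields]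
  · refine List.map_congr_left fun u _ => ?_
    rw [Function.comp_apply, subst, subst, List.flatMap_map]
    refine List.flatMap_congr fun x _ => ?_
    rcases x with δ | ⟨i, j⟩
    · rfl
    · exact (getD_succ_threadYields ts i j).symm

theorem filterMap_forestWord_map_expandItem {ts : List G.DerivTree}
    (hts : ∀ (p : G.Position) t, p.argument ts = some t →
      (forestWord (expand t p).children).filterMap eraseBracket =
        (threadYields t).getD p.threadIdx [])
    (L : List G.Position) :
    (forestWord (L.map (expandItem ts))).filterMap eraseBracket =
      subst (ts.map threadYields) (L.map Position.item) := by
  induction L with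
  | nil => simp [forestWord, subst]
  | cons p L ih =>
    have hword : (forestWord (expandItem ts p :: L.map (expandItem ts))).filterMap eraseBracket =
        p.item.getLeft?.toList ++
          (forestWord (expandItem ts p).children).filterMap eraseBracket ++
          subst (ts.map threadYields) (L.map Position.item) := by
      rw [forestWord_cons, ← ih, label_expandItem]
      cases hp : p.item <;> simp [eraseBracket, hp, List.filterMap_cons]
    rw [List.map_cons, hword, List.map_cons, subst, subst, List.flatMap_cons]
    refine congrArg (· ++ _) ?_
    cases hp : p.item with
    | inl δ =>
      simp [expandItem, Position.argument_of_site_eq_inr (Position.site_eq_inr hp), leaf,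
        Tree.children, forestWord]
    | inr x =>
      have harg := Position.argument_of_site_eq_inl (Position.site_eq_inl hp) ts
      change [] ++ _ = ((ts.map threadYields).getD x.1 []).getD x.2 []
      rw [List.getD_eq_getElem?_getD (l := ts.map threadYields), List.getElem?_map, ← harg,
        expandItem]
      cases ht : p.argument ts with
      | none => simp [leaf, Tree.children, forestWord]
      | some t => simp [hts p t ht, Position.threadIdx_eq hp]

theorem filterMap_forestWord_children_expand {A : G.N} {t : G.DerivTree}
    (ht : WFDeriv G.P A t) : ∀ p : G.Position,
    (forestWord (expand t p).children).filterMap eraseBracket =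
      (threadYields t).getD p.threadIdx [] := by
  refine derivation_induction (fun ρ ts _ ih p => ?_) ht
  rw [children_expand, filterMap_forestWord_map_expandItem, map_item_positions, threadYields_node]
  · exact (List.getD_map _ [] (subst _)).symm
  · intro q t hq
    obtain ⟨-, h⟩ := Position.exists_rel_of_argument_eq_some ih hq
    exact h q

theorem length_yield {A : G.N} {t : G.DerivTree} (ht : WFDeriv G.P A t) :
    t.yield.length = G.sortN A := by
  cases ht with
  | node ρ ts => rw [Tree.yield, List.length_map, ρ.comp_len]

theorem yield_eq_singleton {d : G.DerivTree} (hd : d ∈ G.Derivs) : d.yield = [d.yield.flatten] := by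
  obtain ⟨w, hw⟩ := List.length_eq_one_iff.1 ((length_yield hd).trans G.sort_S)
  simp [hw]

theorem image_flatten_yield_derivs : (fun d => d.yield.flatten) '' G.Derivs = G.lang := by
  ext w
  constructor
  · rintro ⟨d, hd, rfl⟩
    exact ⟨d, hd, yield_eq_singleton hd⟩
  · rintro ⟨d, hd, hyield⟩
    exact ⟨d, hd, by simp [hyield]⟩

theorem filterMap_forestWord_encode {d : G.DerivTree} (hd : d ∈ G.Derivs) :
    (forestWord (encode d)).filterMap eraseBracket = d.yield.flatten := by
  rw [encode, filterMap_forestWord_map_expandItem, map_item_positions]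
  · obtain ⟨w, hw⟩ : ∃ w, d.yield = [w] := ⟨_, yield_eq_singleton hd⟩
    simp [threads, subst, threadYields, hw]
  · intro p t hp
    obtain ⟨A, h⟩ := Position.exists_rel_of_argument_eq_some (forall₂_rhs_none_iff.2 hd) hp
    exact filterMap_forestWord_children_expand h p

/-- The value of a bracket in the evaluation that reconstructs a derivation. Only the brackets of
control threads contribute. -/
def decodeNode (X : G.Symbol) (v : FreeAddMonoid G.DerivTree) : FreeAddMonoid G.DerivTree :=
  if X.1.threadIdx = 0 then X.2.elim 0 fun ρ => .of (.node ρ.1 v.toList) else 0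

/-- The argument whose control thread is read by an item. -/
def controlArgument (ts : List G.DerivTree) : Δ ⊕ ℕ × ℕ → Option G.DerivTree :=
  Sum.elim (fun _ => none) fun x => if x.2 = 0 then ts[x.1]? else none

theorem evalForest_map_expandItem {ts : List G.DerivTree}
    (hts : ∀ (p : G.Position) t, p.argument ts = some t →
      evalForest decodeNode [expand t p] = if p.threadIdx = 0 then .of t else 0)
    (L : List G.Position) :
    evalForest decodeNode (L.map (expandItem ts)) =
      .ofList ((L.map Position.item).filterMap (controlArgument ts)) := by
  induction L with
  | nil => simp [evalForest]
  | cons p L ih =>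
    rw [List.map_cons, List.map_cons, List.filterMap_cons, ← List.singleton_append,
      evalForest_append, ih, expandItem]
    cases hp : p.item with
    | inl δ =>
      rw [Position.argument_of_site_eq_inr (Position.site_eq_inr hp)]
      simp [leaf, evalForest, decodeNode, controlArgument]
    | inr x =>
      have harg := Position.argument_of_site_eq_inl (Position.site_eq_inl hp) ts
      rw [controlArgument, Sum.elim_inr, ← harg]
      cases ht : p.argument ts with
      | none => simp [leaf, evalForest, decodeNode]
      | some t =>
        rw [Option.elim_some, hts p t ht, Position.threadIdx_eq hp]
        split_ifs <;> simp

theorem evalForest_expand {A : G.N} {t : G.DerivTree} (ht : WFDeriv G.P A t) : ∀ p : G.Position,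
    evalForest decodeNode [expand t p] = if p.threadIdx = 0 then .of t else 0 := by
  refine derivation_induction (fun ρ ts hts ih p => ?_) ht
  rw [expand_node, toLabel_coe, evalForest, evalForest, add_zero, decodeNode]
  split_ifs with hp
  · have hvalue : evalForest decodeNode ((positions (some ρ) 0).map (expandItem ts)) =
        .ofList ts := by
      rw [evalForest_map_expandItem, map_item_positions, threads, List.getD_cons_zero,
        List.filterMap_map]
      · refine congrArg FreeAddMonoid.ofList (Eq.trans ?_ (filterMap_getElem?_range ts))
        rw [← hts.length_eq]
        simp [controlArgument, Function.comp_def, rhs]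
      · intro q t hq
        obtain ⟨-, h⟩ := Position.exists_rel_of_argument_eq_some ih hq
        exact h q
    simp [slotSystem, hp, hvalue]
  · rfl

theorem evalForest_encode {d : G.DerivTree} (hd : d ∈ G.Derivs) :
    evalForest decodeNode (encode d) = .of d := by
  rw [encode, evalForest_map_expandItem, map_item_positions]
  · rfl
  · intro p t hp
    obtain ⟨A, h⟩ := Position.exists_rel_of_argument_eq_some (forall₂_rhs_none_iff.2 hd) hp
    exact evalForest_expand h p

theorem injOn_forestWord_encode :
    Set.InjOn (fun d => forestWord (encode d)) G.Derivs := by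
  intro d hd d' hd' h
  have heval := congrArg (List.foldl (evalStep decodeNode) (0, [])) h
  simp only [foldl_evalStep_forestWord, evalForest_encode hd, evalForest_encode hd'] at heval
  exact FreeAddMonoid.of_injective (by simpa using heval)

end MCFG

open MCFG in
theorem CS_derivation_bijection_general (Δ : Type) (G : MCFG Δ) (hP : G.P.Finite)
    (hnd : G.NonDeleting) :
    ∃ (S : Type) (_ : Fintype S) (Pa : Set (Set S)) (R : Set (List (S ⊕ S)))
      (h : S ⊕ S → Option Δ)
      (β : Tree (Production Δ G.N G.sortN) → List (S ⊕ S)),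
      Setoid.IsPartition Pa ∧ IsRegular R ∧
      Set.BijOn β G.Derivs (R ∩ MDyckLang S Pa) ∧
      (∀ d ∈ G.Derivs, (β d).filterMap h = d.yield.flatten) ∧
      (fun u => u.filterMap h) '' (R ∩ MDyckLang S Pa) = G.lang := by
  have : Finite G.P := hP
  have hbij : Set.BijOn (fun d => forestWord (encode d)) G.Derivs
      ((slotSystem G).language (positions none 0) ∩
        MDyckLang G.Symbol (fiberPartition symbolClass)) :=
    ⟨fun d hd => ⟨forestWord_encode_mem_language hd, forestWord_encode_mem_mDyckLang hnd hd⟩,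
      injOn_forestWord_encode, fun w hw => exists_encode_eq hnd hw.1 hw.2⟩
  refine ⟨G.Symbol, .ofFinite _, fiberPartition symbolClass, _, eraseBracket, _,
    Setoid.isPartition_classes _, (slotSystem G).isRegular_language _, hbij,
    fun d hd => filterMap_forestWord_encode hd, ?_⟩
  rw [← hbij.image_eq, Set.image_image]
  exact (Set.image_congr fun d hd => filterMap_forestWord_encode hd).trans
    image_flatten_yield_derivs

end CS

/-- For every non-deleting MCFG `G` without repeated
non-terminals on right-hand sides there are a regular language `R`, a
congruence multiple Dyck language `mD` and an alphabetic homomorphism `h` such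
that some bijection `β : D_G → R ∩ mD` satisfies `h(β(d)) = yield(d)` for all
`d ∈ D_G`; in particular `h(R ∩ mD) = L(G)`. -/
theorem CS.CS_derivation_bijection (Δ : Type) (G : CS.MCFG Δ)
    (hN : Finite G.N) (hP : G.P.Finite) (hnd : G.NonDeleting)
    (hdist : ∀ ρ ∈ G.P, ρ.rhs.Nodup) :
    ∃ (S : Type) (_ : Fintype S) (Pa : Set (Set S)) (R : Set (List (S ⊕ S)))
      (h : S ⊕ S → Option Δ)
      (β : CS.Tree (CS.Production Δ G.N G.sortN) → List (S ⊕ S)),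
      Setoid.IsPartition Pa ∧ CS.IsRegular R ∧
      Set.BijOn β G.Derivs (R ∩ CS.MDyckLang S Pa) ∧
      (∀ d ∈ G.Derivs, (β d).filterMap h = d.yield.flatten) ∧
      (fun u => u.filterMap h) '' (R ∩ CS.MDyckLang S Pa) = G.lang := by
  exact CS.CS_derivation_bijection_general Δ G hP hnd
end

section
/- Composition of weighted and unweighted alphabetic homomorphisms: if ĥ₁: Γ* → (Δ* → 𝒜) is an 𝒜-weighted alphabetic homomorphism and ĥ₂: Σ* → Γ* is an alphabetic homomorphism, then ĥ₁ ∘ ĥ₂: Σ* → (Δ* → 𝒜) is an 𝒜-weighted alphabetic homomorphism; conversely, every 𝒜-weighted alphabetic homomorphism equals ĥ₁ ∘ ĥ₂ for some 𝒜-weighted alphabetic homomorphism ĥ₁ and some alphabetic homomorphism ĥ₂. Hence aHOM(𝒜) ∘ aHOM = aHOM(𝒜). -/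
namespace CS

/-!
An erased letter of `w` should carry the weight `1.ε`, so let `g s` be `g₁ (h₂ s)` or `1.ε`
according to whether `h₂` keeps `s`. The factorizations of `u` into `|ĥ₂ w|` blocks embed, by
inserting an empty block at every erased position, into those with `|w|` blocks. This embedding
preserves the weight product, and a factorization outside its range puts a nonempty block on an
erased letter and so has weight `0`. Hence `ĝ w u` and `ĝ₁ (ĥ₂ w) u` are sums of the same terms. No
distributivity is available, so the comparison is made on the whole index sets at once rather
than letter by letter.
-/

namespace CCSBimonoid

variable {A I J : Type} [CCSBimonoid A]

lemma bigSum_range [Countable J] {e : J → I} (he : e.Injective) (f : I → A) :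
    bigSum (Set.range e) f = bigSum Set.univ (f ∘ e) := by
  have h := bigSum_partition (fun j => {e j}) f fun j j' hj =>
    (Set.disjoint_singleton.2 (he.ne hj)).inter_eq
  simpa only [bigSum_singleton, Set.iUnion_singleton_eq_range, Function.comp_def] using h.symm

lemma bigSum_image {S : Set J} (hS : S.Countable) {e : J → I} (he : e.Injective) (f : I → A) :
    bigSum (e '' S) f = bigSum S (f ∘ e) := by
  have := hS.to_subtype
  calc bigSum (e '' S) f
      = bigSum (Set.range fun j : S => e j) f := by rw [Set.image_eq_range]
    _ = bigSum Set.univ (f ∘ e ∘ Subtype.val) :=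
        bigSum_range (he.comp Subtype.val_injective) f
    _ = bigSum (Set.range (Subtype.val : S → J)) (f ∘ e) :=
        (bigSum_range Subtype.val_injective (f ∘ e)).symm
    _ = bigSum S (f ∘ e) := by rw [Subtype.range_coe]

lemma bigSum_eq_zero {S : Set I} (hS : S.Countable) {f : I → A} (hf : ∀ i ∈ S, f i = 0) :
    bigSum S f = 0 := by
  have := hS.to_subtype
  have hempty := bigSum_partition (fun _ : S => (∅ : Set I)) f fun _ _ _ => Set.inter_self ∅
  calc bigSum S f
      = bigSum (Set.range (Subtype.val : S → I)) f := by rw [Subtype.range_coe]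
    _ = bigSum Set.univ (fun i : S => f i) := bigSum_range Subtype.val_injective f
    _ = bigSum Set.univ (fun _ : S => bigSum (∅ : Set I) f) := by
        simp only [bigSum_empty, hf _ (Subtype.prop _)]
    _ = 0 := by rw [hempty, Set.iUnion_empty, bigSum_empty]

lemma bigSum_union {S T : Set I} (hST : Disjoint S T) (f : I → A) :
    bigSum (S ∪ T) f = bigSum S f + bigSum T f := by
  have hdisj : ∀ b b' : Bool, b ≠ b' → cond b S T ∩ cond b' S T = ∅ := by
    simp [Bool.forall_bool, hST.inter_eq, hST.symm.inter_eq]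
  calc bigSum (S ∪ T) f
      = bigSum Set.univ (fun b => bigSum (cond b S T) f) := by
        rw [bigSum_partition _ f hdisj, Set.union_eq_iUnion]
    _ = bigSum S f + bigSum T f := by
        rw [show (Set.univ : Set Bool) = {true, false} by ext b; cases b <;> simp,
          bigSum_pair _ _ _ (by simp)]
        rfl

lemma bigSum_preimage {S : Set I} (hS : S.Countable) {e : J → I} (he : e.Injective) {f : I → A}
    (hf : ∀ i ∈ S, f i ≠ 0 → i ∈ Set.range e) :
    bigSum (e ⁻¹' S) (f ∘ e) = bigSum S f := by
  have hzero : bigSum (S \ Set.range e) f = 0 :=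
    bigSum_eq_zero (hS.mono Set.sdiff_subset) fun i hi => not_imp_comm.1 (hf i hi.1) hi.2
  calc bigSum (e ⁻¹' S) (f ∘ e)
      = bigSum (S ∩ Set.range e) f := by
        rw [← bigSum_image (hS.preimage he) he, Set.image_preimage_eq_inter_range]
    _ = bigSum (S ∩ Set.range e) f + bigSum (S \ Set.range e) f := by rw [hzero, add_zero]
    _ = bigSum S f := by
        rw [← bigSum_union Set.disjoint_sdiff_inter.symm, Set.inter_union_sdiff]

end CCSBimonoid

section Factorizations

variable {S Γ Δ : Type*}

/-- The factorizations of the word `u` into `n` consecutive, possibly empty, blocks; they index the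
sum defining `whom`. -/
def factorizations (n : ℕ) (u : List Δ) : Set (List (List Δ)) :=
  {ds | ds.length = n ∧ ds.flatten = u}

lemma countable_factorizations (n : ℕ) (u : List Δ) : (factorizations n u).Countable := by
  refine (Set.mapsTo_univ (List.map List.length) _).countable_of_injOn ?_ (Set.to_countable _)
  exact fun ds hds es hes hlen => List.eq_iff_flatten_eq.2 ⟨hds.2.trans hes.2.symm, hlen⟩

/-- Turns a list of blocks for the letters of `w` kept by `h` into one for all letters of `w`, with
an empty block for each erased letter. The two lists need not have matching lengths: superfluous
blocks are appended at the end, and the result stops at the first kept letter without a block, which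
makes the map injective for every `w`. -/
def insertEmptyBlocks (h : S → Option Γ) : List S → List (List Δ) → List (List Δ)
  | [], ds => ds
  | s :: w, ds =>
    match h s, ds with
    | none, ds => [] :: insertEmptyBlocks h w ds
    | some _, [] => []
    | some _, d :: ds => d :: insertEmptyBlocks h w ds

variable (h : S → Option Γ) (w : List S)

lemma length_insertEmptyBlocks_eq_iff (ds : List (List Δ)) :
    (insertEmptyBlocks h w ds).length = w.length ↔ ds.length = (w.filterMap h).length := by
  fun_induction insertEmptyBlocks h w ds <;> simp_all

lemma flatten_insertEmptyBlocks (ds : List (List Δ)) :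
    (insertEmptyBlocks h w ds).flatten = ds.flatten := by
  fun_induction insertEmptyBlocks h w ds <;> simp_all

lemma insertEmptyBlocks_injective :
    (insertEmptyBlocks h w : List (List Δ) → List (List Δ)).Injective := by
  intro ds ds' heq
  induction w generalizing ds ds' with
  | nil => exact heq
  | cons s w ih =>
    rcases hs : h s with _ | γ
    · simp only [insertEmptyBlocks, hs, List.cons.injEq, true_and] at heq
      exact ih heq
    · rcases ds with _ | ⟨d, ds⟩ <;> rcases ds' with _ | ⟨d', ds'⟩ <;>
        simp only [insertEmptyBlocks, hs, List.cons.injEq, reduceCtorEq] at heq ⊢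
      exact heq.imp_right (ih ·)

lemma preimage_insertEmptyBlocks_factorizations (u : List Δ) :
    insertEmptyBlocks h w ⁻¹' factorizations w.length u =
      factorizations (w.filterMap h).length u := by
  ext ds
  exact and_congr (length_insertEmptyBlocks_eq_iff h w ds)
    (by rw [flatten_insertEmptyBlocks])

end Factorizations

section Composition

variable {A S Γ Δ : Type} [CCSBimonoid A]

/-- The weight `g(δ₁)(u₁)·…·g(δ_k)(u_k)` that the blocks `u₁, …, u_k` contribute to `ĝ(δ₁⋯δ_k)`. -/
def blockWeight (g : S → List Δ → A) (w : List S) (ds : List (List Δ)) : A :=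
  ((w.zip ds).map fun p => g p.1 p.2).prod

lemma whom_apply (g : S → List Δ → A) (w : List S) (u : List Δ) :
    whom g w u = CCSBimonoid.bigSum (factorizations w.length u) (blockWeight g w) :=
  rfl

/-- The letter map inducing `ĝ ∘ ĥ`, where letters erased by `h` are sent to the monomial `1.ε`. -/
def precomp (g : Γ → List Δ → A) (h : S → Option Γ) (s : S) : List Δ → A :=
  (h s).elim (fun u => if u = [] then 1 else 0) g

lemma AlphabeticWeightedHom.precomp {g : Γ → List Δ → A} (hg : AlphabeticWeightedHom g)
    (h : S → Option Γ) : AlphabeticWeightedHom (precomp g h) := by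
  refine ⟨fun s u v hu hv => ?_, fun s u hu => ?_⟩ <;> rcases hs : h s with _ | γ <;>
    simp only [CS.precomp, hs, Option.elim_none, Option.elim_some, ne_eq, ite_eq_right_iff,
      Classical.not_imp] at *
  · exact hu.1.trans hv.1.symm
  · exact hg.1 γ u v hu hv
  · simp [hu.1]
  · exact hg.2 γ u hu

variable (g : Γ → List Δ → A) (h : S → Option Γ) (w : List S)

lemma blockWeight_precomp_insertEmptyBlocks (ds : List (List Δ)) :
    blockWeight (precomp g h) w (insertEmptyBlocks h w ds) = blockWeight g (w.filterMap h) ds := by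
  fun_induction insertEmptyBlocks h w ds <;> simp_all [blockWeight, precomp]

lemma mem_range_insertEmptyBlocks {es : List (List Δ)} (hlen : es.length = w.length)
    (hweight : blockWeight (precomp g h) w es ≠ 0) :
    es ∈ Set.range (insertEmptyBlocks h w) := by
  induction w generalizing es with
  | nil => exact ⟨es, rfl⟩
  | cons s w ih =>
    obtain ⟨e, es, rfl⟩ := List.exists_cons_of_length_eq_add_one hlen
    change precomp g h s e * blockWeight (precomp g h) w es ≠ 0 at hweight
    have hhead : precomp g h s e ≠ 0 := fun h0 => hweight (by rw [h0, CCSBimonoid.zero_mul'])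
    have htail : blockWeight (precomp g h) w es ≠ 0 :=
      fun h0 => hweight (by rw [h0, CCSBimonoid.mul_zero'])
    obtain ⟨ds, rfl⟩ := ih (Nat.succ.inj hlen) htail
    rcases hs : h s with _ | γ
    · obtain rfl : e = [] := by
        by_contra he
        exact hhead (by simp [precomp, hs, he])
      exact ⟨ds, by simp only [insertEmptyBlocks, hs]⟩
    · exact ⟨e :: ds, by simp only [insertEmptyBlocks, hs]⟩

theorem whom_precomp : whom (precomp g h) w = whom g (w.filterMap h) := by
  funext u
  calc whom (precomp g h) w u
      = CCSBimonoid.bigSum (factorizations w.length u) (blockWeight (precomp g h) w) :=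
        whom_apply _ _ _
    _ = CCSBimonoid.bigSum (insertEmptyBlocks h w ⁻¹' factorizations w.length u)
          (blockWeight (precomp g h) w ∘ insertEmptyBlocks h w) :=
        (CCSBimonoid.bigSum_preimage (countable_factorizations _ _)
          (insertEmptyBlocks_injective h w)
          fun _ hes hweight => mem_range_insertEmptyBlocks g h w hes.1 hweight).symm
    _ = CCSBimonoid.bigSum (factorizations (w.filterMap h).length u)
          (blockWeight g (w.filterMap h)) := by
        rw [preimage_insertEmptyBlocks_factorizations]
        exact congrArg _ (funext (blockWeight_precomp_insertEmptyBlocks g h w))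
    _ = whom g (w.filterMap h) u := (whom_apply _ _ _).symm

end Composition

end CS

/-- Composition of weighted and unweighted alphabetic
homomorphisms: the composition of an `𝒜`-weighted alphabetic homomorphism with
an alphabetic homomorphism is an `𝒜`-weighted alphabetic homomorphism, and
conversely every `𝒜`-weighted alphabetic homomorphism arises this way.
Hence `aHOM(𝒜) ∘ aHOM = aHOM(𝒜)`. -/
theorem CS.alphabetic_hom_composition (A : Type) [CS.CCSBimonoid A] :
    (∀ (S Γ Δ : Type) (g1 : Γ → List Δ → A) (h2 : S → Option Γ),
      CS.AlphabeticWeightedHom g1 →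
      ∃ g : S → List Δ → A, CS.AlphabeticWeightedHom g ∧
        ∀ w : List S, CS.whom g w = CS.whom g1 (w.filterMap h2)) ∧
    (∀ (S Δ : Type) (g : S → List Δ → A), CS.AlphabeticWeightedHom g →
      ∃ (Γ : Type) (g1 : Γ → List Δ → A) (h2 : S → Option Γ),
        CS.AlphabeticWeightedHom g1 ∧
        ∀ w : List S, CS.whom g1 (w.filterMap h2) = CS.whom g w) := by
  refine ⟨fun S Γ Δ g₁ h₂ hg₁ => ?_, fun S Δ g hg => ?_⟩
  · exact ⟨CS.precomp g₁ h₂, hg₁.precomp h₂, CS.whom_precomp g₁ h₂⟩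
  · exact ⟨S, g, some, hg, fun w => by rw [List.filterMap_some]⟩
end
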